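/- Let α, β be nonzero real numbers, 1/2 < s < 1, C₁, C₂ > 0 and 0 < c₂ < c₁. There exist a constant ε₁ = ε₁(s) > 0, an absolute constant A > 0, and a constant B = B(α, β, s) > 0 such that the following holds. Let X and Y be independent real random variables whose essential ranges are contained in [-c₁, -c₂] ∪ [c₂, c₁], where X is (s₁, C₁)-Frostman, Y is (s₂, C₂)-Frostman, 0 ≤ s₁, s₂ ≤ 1 and s₁ + s₂ ≥ 2s. Then for all n ∈ ℕ, max{ Hₙ(X + Y), Hₙ(αX² + βY²) } ≥ n(s + ε₁) − A·(log₊(C₁C₂) + log₊ c₁ + log₊(1/c₂)) − B. -/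

import Mathlib

open MeasureTheory ProbabilityTheory Real

/-- The dyadic discretization map `D_n(x) = 2^{-n} ⌊2^n x⌋`. -/
noncomputable def Dn (n : ℕ) (x : ℝ) : ℝ := (⌊(2 : ℝ) ^ n * x⌋ : ℝ) / (2 : ℝ) ^ n

/-- Shannon entropy (base 2) of the discrete random variable `f` under `P`. -/
noncomputable def entOf {Ω : Type*} [MeasurableSpace Ω] {S : Type*}
    (P : Measure Ω) (f : Ω → S) : ℝ :=
  ∑' s : S, -((P (f ⁻¹' {s})).toReal * Real.logb 2 (P (f ⁻¹' {s})).toReal)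

/-- `H_n(X)`: entropy of `D_n(X)`. -/
noncomputable def Hn {Ω : Type*} [MeasurableSpace Ω] (P : Measure Ω) (n : ℕ) (X : Ω → ℝ) : ℝ :=
  entOf P (fun ω => Dn n (X ω))

/-- `X` is `(s,C)`-Frostman: `P(X ∈ B(z,r)) ≤ C r^s` for every ball. -/
def Frostman {Ω : Type*} [MeasurableSpace Ω] {E : Type*} [PseudoMetricSpace E]
    (P : Measure Ω) (X : Ω → E) (s C : ℝ) : Prop :=
  ∀ (z : E) (r : ℝ), 0 < r → (P (X ⁻¹' Metric.ball z r)).toReal ≤ C * r ^ s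

/-- `log₊ x = max (log₂ x) 0`. -/
noncomputable def logPlus (x : ℝ) : ℝ := max (Real.logb 2 x) 0

/-!
Let `W` be an independent copy of `Y` and `N = 2 ^ n`. Subadditivity of entropy bounds
`Hₙ(X + Y) + Hₙ(aX² + bY²)` from below by the entropy of the pair of levels of `X + Y` and
`aX² + bW²` at scale `1 / N`, hence by `-log₂` of the probability that two independent samples
`(X, Y, W)` and `(X', Y', W')` have the same pair of levels. Such a collision forces `X'` within
`1 / N` of `X + Y - Y'`, which costs a factor `N ^ (-s₁)` because `X` is Frostman, and it forces
`Z = a((Y - Y')² + 2X(Y - Y')) + b(W'² - W²)` to be `O(1 / N)`.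

The concentration of `Z` near `0` is a Gaussian average of its characteristic function, which is at
most `E|φ(2aξ(Y - Y'))| · |ψ(ξ)|²` with `φ`, `ψ` the characteristic functions of `X` and `bY²`. The
first factor is `O(|ξ| ^ ((1 - s₁ - s₂) / 2))` by an `L²` Fourier bound between two Frostman
measures, and the Gaussian average of `|ψ|²` at frequency `N` is `O(N ^ (-s₂))` because `Y` is
bounded away from `0`. Since `s₁ + s₂ > 1` this gains a power of `N`, except when `s₁` is much
smaller than `s`; then `s₂` exceeds `s` and `X + Y` inherits the Frostman exponent of `Y`.
-/

open scoped ENNReal NNReal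

section Entropy

variable {Ω Ω' S T : Type*} [MeasurableSpace Ω] [MeasurableSpace Ω'] {P : Measure Ω}
  {P' : Measure Ω'} {f : Ω → S} {g : Ω → T} {I : Finset S} {J : Finset T}

lemma sum_mul_logb_le_sum_mul_logb {ι : Type*} {K : Finset ι} {p q : ι → ℝ} {c : ℝ} (hc : 1 < c)
    (hp : ∀ i ∈ K, 0 ≤ p i) (hq : ∀ i ∈ K, 0 ≤ q i) (hpq : ∀ i ∈ K, q i = 0 → p i = 0)
    (hsum : ∑ i ∈ K, q i ≤ ∑ i ∈ K, p i) :
    ∑ i ∈ K, p i * logb c (q i) ≤ ∑ i ∈ K, p i * logb c (p i) := by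
  have term_le : ∀ i ∈ K, p i * log (q i) ≤ p i * log (p i) + (q i - p i) := by
    intro i hi
    rcases (hp i hi).eq_or_lt with h0 | h0
    · simpa [← h0] using hq i hi
    · have hqi : 0 < q i := (hq i hi).lt_of_ne fun h ↦ h0.ne' (hpq i hi h.symm)
      have hlog := mul_le_mul_of_nonneg_left (log_le_sub_one_of_pos (div_pos hqi h0)) h0.le
      rw [log_div hqi.ne' h0.ne', mul_sub, mul_sub, mul_div_cancel₀ _ h0.ne'] at hlog
      linarith
  have hlog : ∑ i ∈ K, p i * log (q i) ≤ ∑ i ∈ K, p i * log (p i) := by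
    have := Finset.sum_le_sum term_le
    rw [Finset.sum_add_distrib, Finset.sum_sub_distrib] at this
    linarith
  simp only [logb, ← mul_div_assoc, ← Finset.sum_div]
  exact div_le_div_of_nonneg_right hlog (log_pos hc).le

lemma entOf_comp_of_injective {e : S → T} (he : e.Injective) :
    entOf P (fun ω ↦ e (f ω)) = entOf P f := by
  unfold entOf
  rw [← he.tsum_eq]
  · have preimage_eq (s : S) : (fun ω ↦ e (f ω)) ⁻¹' {e s} = f ⁻¹' {s} := by
      ext ω
      simp [he.eq_iff]
    simp only [preimage_eq]
  · intro t ht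
    contrapose! ht
    have : (fun ω ↦ e (f ω)) ⁻¹' {t} = ∅ := by
      ext ω
      simpa using fun h ↦ ht ⟨f ω, h⟩
    simp [this]

lemma entOf_eq_of_identDistrib [MeasurableSpace S] [MeasurableSingletonClass S] {f' : Ω' → S}
    (h : IdentDistrib f f' P P') : entOf P f = entOf P' f' := by
  simp only [entOf, h.measure_mem_eq (measurableSet_singleton _)]

lemma entOf_eq_neg_sum (hf : ∀ᵐ ω ∂P, f ω ∈ I) :
    entOf P f = -∑ s ∈ I, P.real (f ⁻¹' {s}) * logb 2 (P.real (f ⁻¹' {s})) := by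
  rw [entOf, tsum_eq_sum (s := I), Finset.sum_neg_distrib]
  · rfl
  · intro s hs
    have : P (f ⁻¹' {s}) = 0 :=
      measure_eq_zero_iff_ae_notMem.2 <| hf.mono fun ω hω h ↦ hs (h ▸ hω)
    simp [this]

lemma sum_measureReal_inter_preimage_singleton [IsFiniteMeasure P] [MeasurableSpace S]
    [MeasurableSingletonClass S] (hfm : Measurable f) (hf : ∀ᵐ ω ∂P, f ω ∈ I) {A : Set Ω}
    (hA : MeasurableSet A) : ∑ s ∈ I, P.real (f ⁻¹' {s} ∩ A) = P.real A := by
  rw [← measureReal_biUnion_finset]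
  · refine measureReal_congr ?_
    filter_upwards [hf] with ω hω
    refine propext (Set.mem_iUnion₂.trans ?_)
    exact ⟨fun ⟨_, _, h⟩ ↦ h.2, fun h ↦ ⟨f ω, hω, rfl, h⟩⟩
  · intro s _ t _ hst
    exact Disjoint.mono Set.inter_subset_left Set.inter_subset_left
      ((Set.disjoint_singleton.2 hst).preimage f)
  · exact fun s _ ↦ (hfm (measurableSet_singleton s)).inter hA

lemma sum_measureReal_preimage_singleton_eq_one [IsProbabilityMeasure P] [MeasurableSpace S]
    [MeasurableSingletonClass S] (hfm : Measurable f) (hf : ∀ᵐ ω ∂P, f ω ∈ I) :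
    ∑ s ∈ I, P.real (f ⁻¹' {s}) = 1 := by
  simpa using sum_measureReal_inter_preimage_singleton hfm hf MeasurableSet.univ

lemma entOf_le_neg_sum_mul_logb [IsProbabilityMeasure P] [MeasurableSpace S]
    [MeasurableSingletonClass S] (hfm : Measurable f) (hf : ∀ᵐ ω ∂P, f ω ∈ I) {q : S → ℝ}
    (hq : ∀ s ∈ I, 0 ≤ q s) (hfq : ∀ s ∈ I, q s = 0 → P.real (f ⁻¹' {s}) = 0)
    (hsum : ∑ s ∈ I, q s ≤ 1) : entOf P f ≤ -∑ s ∈ I, P.real (f ⁻¹' {s}) * logb 2 (q s) := by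
  rw [entOf_eq_neg_sum hf, neg_le_neg_iff]
  refine sum_mul_logb_le_sum_mul_logb one_lt_two (fun _ _ ↦ measureReal_nonneg) hq hfq ?_
  rwa [sum_measureReal_preimage_singleton_eq_one hfm hf]

lemma entOf_prodMk_le_add [IsProbabilityMeasure P] [MeasurableSpace S] [MeasurableSingletonClass S]
    [MeasurableSpace T] [MeasurableSingletonClass T] (hfm : Measurable f) (hgm : Measurable g)
    (hf : ∀ᵐ ω ∂P, f ω ∈ I) (hg : ∀ᵐ ω ∂P, g ω ∈ J) :
    entOf P (fun ω ↦ (f ω, g ω)) ≤ entOf P f + entOf P g := by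
  set p : S × T → ℝ := fun i ↦ P.real ((fun ω ↦ (f ω, g ω)) ⁻¹' {i})
  set pf : S → ℝ := fun s ↦ P.real (f ⁻¹' {s}) with hpf
  set pg : T → ℝ := fun t ↦ P.real (g ⁻¹' {t}) with hpg
  have p_eq (i : S × T) : p i = P.real (f ⁻¹' {i.1} ∩ g ⁻¹' {i.2}) := by
    refine congrArg P.real (Set.ext fun ω ↦ ?_)
    simp [Prod.ext_iff]
  have sum_fst (t : T) : ∑ s ∈ I, p (s, t) = pg t := by
    simpa only [p_eq] using
      sum_measureReal_inter_preimage_singleton hfm hf (hgm (measurableSet_singleton t))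
  have sum_snd (s : S) : ∑ t ∈ J, p (s, t) = pf s := by
    simpa only [p_eq, Set.inter_comm (f ⁻¹' {s})] using
      sum_measureReal_inter_preimage_singleton hgm hg (hfm (measurableSet_singleton s))
  have eq_zero_of_left (i : S × T) (h : pf i.1 = 0) : p i = 0 :=
    (p_eq i).trans (measureReal_mono_null Set.inter_subset_left h)
  have eq_zero_of_right (i : S × T) (h : pg i.2 = 0) : p i = 0 :=
    (p_eq i).trans (measureReal_mono_null Set.inter_subset_right h)
  have gibbs : entOf P (fun ω ↦ (f ω, g ω)) ≤ -∑ i ∈ I ×ˢ J, p i * logb 2 (pf i.1 * pg i.2) := by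
    refine entOf_le_neg_sum_mul_logb (hfm.prodMk hgm)
      (by filter_upwards [hf, hg] with ω hωf hωg using Finset.mk_mem_product hωf hωg)
      (fun _ _ ↦ mul_nonneg measureReal_nonneg measureReal_nonneg)
      (fun i _ h ↦ (mul_eq_zero.1 h).elim (eq_zero_of_left i) (eq_zero_of_right i)) (le_of_eq ?_)
    simp only [Finset.sum_product, ← Finset.mul_sum, hpf, hpg, mul_one,
      sum_measureReal_preimage_singleton_eq_one hfm hf,
      sum_measureReal_preimage_singleton_eq_one hgm hg]
  have split_log (i : S × T) :
      p i * logb 2 (pf i.1 * pg i.2) = p i * logb 2 (pf i.1) + p i * logb 2 (pg i.2) := by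
    by_cases h : p i = 0
    · simp [h]
    · rw [logb_mul (mt (eq_zero_of_left i) h) (mt (eq_zero_of_right i) h), mul_add]
  rw [Finset.sum_congr rfl fun i _ ↦ split_log i, Finset.sum_add_distrib, Finset.sum_product,
    Finset.sum_product_right, neg_add] at gibbs
  simpa only [entOf_eq_neg_sum hf, entOf_eq_neg_sum hg, ← Finset.sum_mul, sum_fst, sum_snd]
    using gibbs

lemma neg_logb_le_entOf_of_sum_sq_le [IsProbabilityMeasure P] [MeasurableSpace S]
    [MeasurableSingletonClass S] (hfm : Measurable f) (hf : ∀ᵐ ω ∂P, f ω ∈ I) {δ : ℝ}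
    (hδ : ∑ s ∈ I, P.real (f ⁻¹' {s}) ^ 2 ≤ δ) : -logb 2 δ ≤ entOf P f := by
  set p : S → ℝ := fun s ↦ P.real (f ⁻¹' {s})
  have sum_p : ∑ s ∈ I, p s = 1 := sum_measureReal_preimage_singleton_eq_one hfm hf
  have δ_pos : 0 < δ := by
    obtain ⟨s, hs, hps⟩ : ∃ s ∈ I, p s ≠ 0 := by
      by_contra! h
      simp [Finset.sum_eq_zero h] at sum_p
    exact (Finset.sum_pos' (fun s _ ↦ sq_nonneg (p s)) ⟨s, hs, by positivity⟩).trans_le hδ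
  have gibbs : entOf P f ≤ -∑ s ∈ I, p s * logb 2 (p s ^ 2 / δ) := by
    refine entOf_le_neg_sum_mul_logb hfm hf (fun _ _ ↦ by positivity)
      (fun s _ h ↦ by simpa [δ_pos.ne'] using h) ?_
    rwa [← Finset.sum_div, div_le_one δ_pos]
  have split_log (s : S) :
      p s * logb 2 (p s ^ 2 / δ) = 2 * (p s * logb 2 (p s)) - p s * logb 2 δ := by
    by_cases h : p s = 0
    · simp [h]
    · rw [logb_div (pow_ne_zero 2 h) δ_pos.ne', logb_pow]
      push_cast
      ring
  rw [Finset.sum_congr rfl fun s _ ↦ split_log s, Finset.sum_sub_distrib, ← Finset.mul_sum,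
    ← Finset.sum_mul, sum_p] at gibbs
  have := entOf_eq_neg_sum hf
  linarith

lemma neg_logb_le_entOf_of_fibre_le [IsProbabilityMeasure P] [MeasurableSpace S]
    [MeasurableSingletonClass S] (hfm : Measurable f) (hf : ∀ᵐ ω ∂P, f ω ∈ I) {δ : ℝ}
    (hδ : ∀ s, P.real (f ⁻¹' {s}) ≤ δ) : -logb 2 δ ≤ entOf P f := by
  refine neg_logb_le_entOf_of_sum_sq_le hfm hf ?_
  calc ∑ s ∈ I, P.real (f ⁻¹' {s}) ^ 2 ≤ ∑ s ∈ I, δ * P.real (f ⁻¹' {s}) := by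
        refine Finset.sum_le_sum fun s _ ↦ ?_
        rw [sq]
        exact mul_le_mul_of_nonneg_right (hδ s) measureReal_nonneg
    _ = δ := by rw [← Finset.mul_sum, sum_measureReal_preimage_singleton_eq_one hfm hf, mul_one]

lemma neg_logb_le_entOf_of_collision_le [IsProbabilityMeasure P] [MeasurableSpace S]
    [MeasurableSingletonClass S] (hfm : Measurable f) (hf : ∀ᵐ ω ∂P, f ω ∈ I) {δ : ℝ}
    (hδ : (P.prod P).real {q | f q.1 = f q.2} ≤ δ) : -logb 2 δ ≤ entOf P f := by
  refine neg_logb_le_entOf_of_sum_sq_le hfm hf ?_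
  have fibre_meas (s : S) : MeasurableSet (f ⁻¹' {s}) := hfm (measurableSet_singleton s)
  calc ∑ s ∈ I, P.real (f ⁻¹' {s}) ^ 2
      = ∑ s ∈ I, (P.prod P).real ((f ⁻¹' {s}) ×ˢ (f ⁻¹' {s})) := by
        simp only [measureReal_prod_prod, sq]
    _ = (P.prod P).real (⋃ s ∈ I, (f ⁻¹' {s}) ×ˢ (f ⁻¹' {s})) := by
        refine (measureReal_biUnion_finset (fun s _ t _ hst ↦ ?_)
          fun s _ ↦ (fibre_meas s).prod (fibre_meas s)).symm
        exact Set.disjoint_prod.2 (.inl ((Set.disjoint_singleton.2 hst).preimage f))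
    _ ≤ (P.prod P).real {q | f q.1 = f q.2} := by
        refine measureReal_mono (Set.iUnion₂_subset fun s _ q hq ↦ ?_)
        exact hq.1.trans hq.2.symm
    _ ≤ δ := hδ

lemma Hn_eq_entOf_floor (n : ℕ) (X : Ω → ℝ) :
    Hn P n X = entOf P (fun ω ↦ ⌊(2 : ℝ) ^ n * X ω⌋) := by
  have : Function.Injective fun k : ℤ ↦ (k : ℝ) / 2 ^ n := fun k l h ↦ by
    simpa [div_left_inj'] using h
  exact entOf_comp_of_injective this

lemma Hn_eq_of_identDistrib {X : Ω → ℝ} {X' : Ω' → ℝ} (h : IdentDistrib X X' P P') (n : ℕ) :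
    Hn P n X = Hn P' n X' := by
  rw [Hn_eq_entOf_floor, Hn_eq_entOf_floor]
  exact entOf_eq_of_identDistrib (h.comp (u := fun x ↦ ⌊(2 : ℝ) ^ n * x⌋) (by fun_prop))

lemma exists_finset_floor_mem {X : Ω → ℝ} {R : ℝ} (hX : ∀ᵐ ω ∂P, |X ω| ≤ R) (n : ℕ) :
    ∃ I : Finset ℤ, ∀ᵐ ω ∂P, ⌊(2 : ℝ) ^ n * X ω⌋ ∈ I := by
  refine ⟨Finset.Icc ⌊-((2 : ℝ) ^ n * R)⌋ ⌊(2 : ℝ) ^ n * R⌋, hX.mono fun ω hω ↦ ?_⟩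
  obtain ⟨hl, hu⟩ := abs_le.1 hω
  rw [Finset.mem_Icc, ← mul_neg]
  exact ⟨Int.floor_mono (by gcongr), Int.floor_mono (by gcongr)⟩

end Entropy

section Frostman

variable {Ω E : Type*} [MeasurableSpace Ω] [PseudoMetricSpace E] {P : Measure Ω} {s C : ℝ}

namespace Frostman

lemma mono {X : Ω → E} {C' : ℝ} (h : Frostman P X s C) (hC : C ≤ C') : Frostman P X s C' :=
  fun z r hr ↦ (h z r hr).trans (by gcongr)

lemma nonneg [Nonempty E] {X : Ω → E} (h : Frostman P X s C) : 0 ≤ C := by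
  simpa using ENNReal.toReal_nonneg.trans (h (Classical.arbitrary E) 1 one_pos)

lemma map [MeasurableSpace E] [OpensMeasurableSpace E] {X : Ω → E} (hX : Measurable X)
    (h : Frostman P X s C) : Frostman (P.map X) id s C := by
  intro z r hr
  rw [Set.preimage_id, Measure.map_apply hX measurableSet_ball]
  exact h z r hr

lemma of_le_smul [IsFiniteMeasure P] {Q : Measure Ω} {X : Ω → E} (h : Frostman P X s C)
    {k : ℝ≥0} (hQ : Q ≤ k • P) : Frostman Q X s (k * C) := by
  intro z r hr
  calc Q.real (X ⁻¹' Metric.ball z r) ≤ (k • P).real (X ⁻¹' Metric.ball z r) :=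
        ENNReal.toReal_mono (measure_ne_top _ _) (hQ _)
    _ = k * P.real (X ⁻¹' Metric.ball z r) := by simp
    _ ≤ k * C * r ^ s := by
        rw [mul_assoc]
        exact mul_le_mul_of_nonneg_left (h z r hr) k.2

lemma measureReal_preimage_le [Nonempty E] [IsFiniteMeasure P] {X : Ω → E} (h : Frostman P X s C)
    {A : Set E} {r : ℝ} (hr : 0 < r) (hA : ∀ x ∈ A, ∀ y ∈ A, dist x y < r) :
    P.real (X ⁻¹' A) ≤ C * r ^ s := by
  rcases A.eq_empty_or_nonempty with rfl | ⟨y, hy⟩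
  · simpa using mul_nonneg h.nonneg (rpow_nonneg hr.le s)
  · exact (measureReal_mono (Set.preimage_mono fun x hx ↦ hA x hx y hy)).trans (h y r hr)

lemma one_le_mul_rpow [IsProbabilityMeasure P] {X : Ω → E} (h : Frostman P X s C) {z : E} {r : ℝ}
    (hr : 0 < r) (hX : ∀ᵐ ω ∂P, X ω ∈ Metric.ball z r) : 1 ≤ C * r ^ s :=
  calc (1 : ℝ) = P.real (X ⁻¹' Metric.ball z r) := by
        rw [← probReal_univ (μ := P)]
        exact measureReal_congr (hX.mono fun ω hω ↦ propext (iff_of_true trivial hω))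
    _ ≤ C * r ^ s := h z r hr

lemma measureReal_prod_dist_lt_le [Nonempty E] {κ : Measure Ω} [IsFiniteMeasure κ]
    [MeasurableSpace E] [OpensMeasurableSpace E] [SecondCountableTopology E] {μ : Measure E}
    [IsFiniteMeasure μ] (h : Frostman μ id s C) {g : Ω → E} (hg : Measurable g) {A : Set Ω}
    (hA : MeasurableSet A) {r : ℝ} (hr : 0 < r) :
    (κ.prod μ).real {q | q.1 ∈ A ∧ dist q.2 (g q.1) < r} ≤ C * r ^ s * κ.real A := by
  have hCr : 0 ≤ C * r ^ s := mul_nonneg h.nonneg (rpow_nonneg hr.le s)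
  have meas : MeasurableSet {q : Ω × E | q.1 ∈ A ∧ dist q.2 (g q.1) < r} :=
    (measurable_fst hA).inter
      (measurableSet_lt (measurable_snd.dist (hg.comp measurable_fst)) measurable_const)
  refine ENNReal.toReal_le_of_le_ofReal (by positivity) ?_
  calc (κ.prod μ) {q | q.1 ∈ A ∧ dist q.2 (g q.1) < r}
      = ∫⁻ ω, μ (Prod.mk ω ⁻¹' {q | q.1 ∈ A ∧ dist q.2 (g q.1) < r}) ∂κ := Measure.prod_apply meas
    _ ≤ ∫⁻ ω, A.indicator (fun _ ↦ ENNReal.ofReal (C * r ^ s)) ω ∂κ := by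
        refine lintegral_mono fun ω ↦ ?_
        by_cases hω : ω ∈ A
        · simpa [hω, Metric.ball] using
            (ENNReal.le_ofReal_iff_toReal_le (measure_ne_top _ _) hCr).2 (h (g ω) r hr)
        · simp [hω]
    _ = ENNReal.ofReal (C * r ^ s * κ.real A) := by
        rw [lintegral_indicator_const hA, ENNReal.ofReal_mul hCr, ofReal_measureReal]

lemma add_of_indepFun [IsProbabilityMeasure P] {X Y : Ω → ℝ} (hX : Measurable X)
    (hY : Measurable Y) (hXY : IndepFun X Y P) (h : Frostman P Y s C) :
    Frostman P (fun ω ↦ X ω + Y ω) s C := by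
  have := Measure.isProbabilityMeasure_map (μ := P) hX.aemeasurable
  have := Measure.isProbabilityMeasure_map (μ := P) hY.aemeasurable
  intro z r hr
  have meas : MeasurableSet {q : ℝ × ℝ | dist q.2 (z - q.1) < r} :=
    measurableSet_lt (by fun_prop) measurable_const
  calc P.real ((fun ω ↦ X ω + Y ω) ⁻¹' Metric.ball z r)
      = (P.map fun ω ↦ (X ω, Y ω)).real {q | dist q.2 (z - q.1) < r} := by
        rw [map_measureReal_apply (hX.prodMk hY) meas]
        refine congrArg P.real (Set.ext fun ω ↦ ?_)
        simp [dist_eq, add_comm]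
    _ ≤ C * r ^ s * (P.map X).real Set.univ := by
        rw [(indepFun_iff_map_prod_eq_prod_map_map hX.aemeasurable hY.aemeasurable).1 hXY]
        simpa using (h.map hY).measureReal_prod_dist_lt_le (κ := P.map X)
          (measurable_const.sub measurable_id) MeasurableSet.univ hr
    _ = C * r ^ s := by simp

lemma const_mul_sq [IsFiniteMeasure P] {Y : Ω → ℝ} (h : Frostman P Y s C) {b c : ℝ} (hb : b ≠ 0)
    (hc : 0 < c) (hY : ∀ᵐ ω ∂P, c ≤ |Y ω|) :
    Frostman P (fun ω ↦ b * Y ω ^ 2) s (2 * C * (1 / (|b| * c)) ^ s) := by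
  intro z r hr
  have hbc : 0 < |b| * c := by positivity
  have dist_lt {x y : ℝ} (hx : |b * x ^ 2 - z| < r) (hy : |b * y ^ 2 - z| < r)
      (hxy : 2 * c ≤ |x + y|) : dist x y < r * (1 / (|b| * c)) := by
    have sq_close : |b| * |x + y| * |x - y| < 2 * r := by
      rw [← abs_mul, ← abs_mul,
        show b * (x + y) * (x - y) = b * x ^ 2 - z - (b * y ^ 2 - z) by ring]
      linarith [abs_sub (b * x ^ 2 - z) (b * y ^ 2 - z)]
    have := mul_le_mul_of_nonneg_right (mul_le_mul_of_nonneg_left hxy (abs_nonneg b))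
      (abs_nonneg (x - y))
    rw [dist_eq, mul_one_div, lt_div_iff₀ hbc]
    linarith
  set pos : Set ℝ := {y | c ≤ y ∧ |b * y ^ 2 - z| < r}
  set neg : Set ℝ := {y | y ≤ -c ∧ |b * y ^ 2 - z| < r}
  have cover : ∀ᵐ ω ∂P, ω ∈ (fun ω ↦ b * Y ω ^ 2) ⁻¹' Metric.ball z r →
      ω ∈ Y ⁻¹' pos ∪ Y ⁻¹' neg := by
    filter_upwards [hY] with ω hω hball
    exact (le_abs.1 hω).imp (⟨·, hball⟩) fun hneg ↦ ⟨le_neg.1 hneg, hball⟩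
  have hr' : 0 < r * (1 / (|b| * c)) := by positivity
  have pos_le := h.measureReal_preimage_le (A := pos) hr' fun x hx y hy ↦
    dist_lt hx.2 hy.2 (le_abs.2 (.inl (by linarith [hx.1, hy.1])))
  have neg_le := h.measureReal_preimage_le (A := neg) hr' fun x hx y hy ↦
    dist_lt hx.2 hy.2 (le_abs.2 (.inr (by linarith [hx.1, hy.1])))
  calc P.real ((fun ω ↦ b * Y ω ^ 2) ⁻¹' Metric.ball z r)
      ≤ P.real (Y ⁻¹' pos ∪ Y ⁻¹' neg) :=
        ENNReal.toReal_mono (measure_ne_top _ _) (measure_mono_ae cover)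
    _ ≤ P.real (Y ⁻¹' pos) + P.real (Y ⁻¹' neg) := measureReal_union_le _ _
    _ ≤ 2 * C * (1 / (|b| * c)) ^ s * r ^ s := by
        rw [mul_rpow hr.le (by positivity)] at pos_le neg_le
        linarith

lemma pos_of_abs_le [IsProbabilityMeasure P] {X : Ω → ℝ} (h : Frostman P X s C) {R : ℝ}
    (hXR : ∀ᵐ ω ∂P, |X ω| ≤ R) : 0 < C := by
  have hr : 0 < |R| + 1 := by positivity
  have one_le : 1 ≤ C * (|R| + 1) ^ s := h.one_le_mul_rpow (z := 0) hr <| hXR.mono fun ω hω ↦ by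
    simpa using hω.trans_lt (by linarith [le_abs_self R])
  exact pos_of_mul_pos_left (one_pos.trans_le one_le) (by positivity)

lemma mul_sub_logb_le_Hn [IsProbabilityMeasure P] {X : Ω → ℝ} (hX : Measurable X)
    (h : Frostman P X s C) {R : ℝ} (hXR : ∀ᵐ ω ∂P, |X ω| ≤ R) (n : ℕ) :
    n * s - logb 2 C ≤ Hn P n X := by
  have hC : 0 < C := h.pos_of_abs_le hXR
  obtain ⟨I, hI⟩ := exists_finset_floor_mem hXR n
  have fibre_le (k : ℤ) : P.real ((fun ω ↦ ⌊(2 : ℝ) ^ n * X ω⌋) ⁻¹' {k}) ≤ C * (2 ^ n)⁻¹ ^ s := by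
    refine (measureReal_mono fun ω hω ↦ ?_).trans (h (k / 2 ^ n) (2 ^ n)⁻¹ (by positivity))
    have hN : (0 : ℝ) < 2 ^ n := by positivity
    obtain ⟨hl, hu⟩ := Int.floor_eq_iff.1 hω
    rw [Set.mem_preimage, Metric.mem_ball, dist_eq, abs_of_nonneg, sub_lt_iff_lt_add,
      inv_eq_one_div, ← add_div, lt_div_iff₀ hN]
    · linarith
    · rwa [sub_nonneg, div_le_iff₀ hN, mul_comm]
  have := neg_logb_le_entOf_of_fibre_le (by fun_prop) hI fibre_le
  rw [Hn_eq_entOf_floor]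
  refine le_trans (le_of_eq ?_) this
  rw [logb_mul hC.ne' (by positivity), logb_rpow_eq_mul_logb_of_pos (by positivity), logb_inv,
    logb_pow, logb_self_eq_one one_lt_two]
  ring

end Frostman

end Frostman

section Gaussian

variable {Ω : Type*} [MeasurableSpace Ω] {P : Measure Ω} {s C : ℝ}

lemma exp_neg_sq_div_two_le_tsum (u : ℝ) : ENNReal.ofReal (exp (-u ^ 2 / 2)) ≤
    ∑' j : ℕ, ENNReal.ofReal (8 * (1 / 4) ^ j) * (Metric.ball 0 (2 ^ j)).indicator 1 u := by
  obtain ⟨j, hj, hexp⟩ : ∃ j : ℕ, |u| < 2 ^ j ∧ exp (-u ^ 2 / 2) ≤ 8 * (1 / 4) ^ j := by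
    rcases lt_or_ge |u| 1 with h | h
    · have : exp (-u ^ 2 / 2) ≤ 1 := exp_le_one_iff.2 (by nlinarith [sq_nonneg u])
      exact ⟨0, by simpa using h, by linarith⟩
    · obtain ⟨j, hj, hj'⟩ := exists_nat_pow_near h one_lt_two
      refine ⟨j + 1, hj', ?_⟩
      have four_pow_le : (4 : ℝ) ^ j ≤ u ^ 2 := by
        rw [← sq_abs u, show (4 : ℝ) = 2 ^ 2 by norm_num, pow_right_comm]
        gcongr
      have : (0 : ℝ) < 4 ^ j := by positivity
      rw [neg_div, exp_neg, inv_le_comm₀ (exp_pos _) (by positivity)]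
      calc (8 * (1 / 4 : ℝ) ^ (j + 1))⁻¹ = 4 ^ j / 2 := by
            rw [one_div, inv_pow, pow_succ]
            field_simp
            norm_num
        _ ≤ u ^ 2 / 2 + 1 := by linarith
        _ ≤ exp (u ^ 2 / 2) := add_one_le_exp _
  refine le_trans ?_ (ENNReal.le_tsum j)
  rw [Set.indicator_of_mem (by simpa using hj), Pi.one_apply, mul_one]
  exact ENNReal.ofReal_le_ofReal hexp

lemma Frostman.ofReal_mul_measure_dyadic_ball_le [IsFiniteMeasure P] {X : Ω → ℝ}
    (h : Frostman P X s C) (hs : s ≤ 1) {t : ℝ} (ht : 0 < t) (z : ℝ) (j : ℕ) :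
    ENNReal.ofReal (8 * (1 / 4) ^ j) * P (X ⁻¹' Metric.ball z (2 ^ j / t)) ≤
      ENNReal.ofReal (8 * C * t ^ (-s) * (1 / 2) ^ j) := by
  have hC : 0 ≤ C := h.nonneg
  have ball_le := h z (2 ^ j / t) (by positivity)
  rw [← ENNReal.le_ofReal_iff_toReal_le (measure_ne_top _ _) (by positivity)] at ball_le
  refine (mul_le_mul_right ball_le _).trans ?_
  rw [← ENNReal.ofReal_mul (by positivity)]
  refine ENNReal.ofReal_le_ofReal ?_
  have pow_rpow_le : ((2 : ℝ) ^ j) ^ s ≤ 2 ^ j :=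
    rpow_le_self_of_one_le (one_le_pow₀ one_le_two) hs
  calc 8 * (1 / 4 : ℝ) ^ j * (C * (2 ^ j / t) ^ s)
      = 8 * C * t ^ (-s) * ((1 / 4) ^ j * (2 ^ j) ^ s) := by
        rw [div_rpow (by positivity) ht.le, rpow_neg ht.le]
        ring
    _ ≤ 8 * C * t ^ (-s) * ((1 / 4) ^ j * 2 ^ j) := by gcongr
    _ = 8 * C * t ^ (-s) * (1 / 2) ^ j := by
        rw [← mul_pow]
        norm_num

lemma Frostman.lintegral_exp_neg_sq_le [IsFiniteMeasure P] {X : Ω → ℝ} (hX : Measurable X)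
    (h : Frostman P X s C) (hs : s ≤ 1) {t : ℝ} (ht : 0 < t) (z : ℝ) :
    ∫⁻ ω, ENNReal.ofReal (exp (-(t * (X ω - z)) ^ 2 / 2)) ∂P ≤
      ENNReal.ofReal (16 * C * t ^ (-s)) := by
  have hC : 0 ≤ C := h.nonneg
  have meas (j : ℕ) : MeasurableSet (X ⁻¹' Metric.ball z (2 ^ j / t)) := hX measurableSet_ball
  calc ∫⁻ ω, ENNReal.ofReal (exp (-(t * (X ω - z)) ^ 2 / 2)) ∂P
      ≤ ∫⁻ ω, ∑' j : ℕ, ENNReal.ofReal (8 * (1 / 4) ^ j) *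
          (X ⁻¹' Metric.ball z (2 ^ j / t)).indicator 1 ω ∂P := by
        refine lintegral_mono fun ω ↦ (exp_neg_sq_div_two_le_tsum _).trans (le_of_eq ?_)
        congr! 3 with j
        simp only [Set.indicator, Set.mem_preimage, Metric.mem_ball, dist_eq, sub_zero, abs_mul,
          abs_of_pos ht, lt_div_iff₀' ht, Pi.one_apply]
    _ = ∑' j : ℕ, ENNReal.ofReal (8 * (1 / 4) ^ j) * P (X ⁻¹' Metric.ball z (2 ^ j / t)) := by
        rw [lintegral_tsum fun j ↦ ((measurable_one.indicator (meas j)).const_mul _).aemeasurable]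
        congr! 2 with j
        rw [lintegral_const_mul _ (measurable_one.indicator (meas j)),
          lintegral_indicator_one (meas j)]
    _ ≤ ∑' j : ℕ, ENNReal.ofReal (8 * C * t ^ (-s) * (1 / 2) ^ j) :=
        ENNReal.tsum_le_tsum (h.ofReal_mul_measure_dyadic_ball_le hs ht z)
    _ = ENNReal.ofReal (16 * C * t ^ (-s)) := by
        rw [← ENNReal.ofReal_tsum_of_nonneg (fun j ↦ by positivity)
          (summable_geometric_two.mul_left _), tsum_mul_left, tsum_geometric_two]
        congr 1
        ring

lemma Frostman.integral_exp_neg_sq_le [IsFiniteMeasure P] {X : Ω → ℝ} (hX : Measurable X)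
    (h : Frostman P X s C) (hs : s ≤ 1) {t : ℝ} (ht : 0 < t) (z : ℝ) :
    ∫ ω, exp (-(t * (X ω - z)) ^ 2 / 2) ∂P ≤ 16 * C * t ^ (-s) := by
  have hC : 0 ≤ C := h.nonneg
  rw [integral_eq_lintegral_of_nonneg_ae (.of_forall fun _ ↦ by positivity) (by fun_prop)]
  exact ENNReal.toReal_le_of_le_ofReal (by positivity) (h.lintegral_exp_neg_sq_le hX hs ht z)

lemma frostman_gaussianReal (η : ℝ) {σ : ℝ≥0} (hσ : σ ≠ 0) :
    Frostman (gaussianReal η (σ ^ 2)) id 1 (1 / σ) := by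
  intro z r hr
  have hσ' : (0 : ℝ) < σ := by positivity
  have pdf_le (u : ℝ) : gaussianPDFReal η (σ ^ 2) u ≤ 1 / (2 * σ) := by
    have sqrt_ge : 2 * (σ : ℝ) ≤ √(2 * π * (σ ^ 2 : ℝ≥0)) := by
      refine le_sqrt_of_sq_le ?_
      push_cast
      nlinarith [pi_gt_three, sq_pos_of_pos hσ']
    have exp_le : exp (-(u - η) ^ 2 / (2 * (σ ^ 2 : ℝ≥0))) ≤ 1 :=
      exp_le_one_iff.2 (div_nonpos_of_nonpos_of_nonneg (by nlinarith [sq_nonneg (u - η)])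
        (by positivity))
    rw [gaussianPDFReal, one_div]
    exact (mul_le_of_le_one_right (by positivity) exp_le).trans (by gcongr)
  refine ENNReal.toReal_le_of_le_ofReal (by positivity) ?_
  rw [Set.preimage_id, gaussianReal_apply _ (pow_ne_zero 2 hσ)]
  calc ∫⁻ u in Metric.ball z r, gaussianPDF η (σ ^ 2) u
      ≤ ∫⁻ _ in Metric.ball z r, ENNReal.ofReal (1 / (2 * σ)) :=
        lintegral_mono fun u ↦ ENNReal.ofReal_le_ofReal (pdf_le u)
    _ = ENNReal.ofReal (1 / σ * r ^ (1 : ℝ)) := by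
        rw [setLIntegral_const, Real.volume_ball, ← ENNReal.ofReal_mul (by positivity), rpow_one]
        congr 1
        field_simp

lemma integral_charFun_gaussianReal (ρ : Measure ℝ) [IsFiniteMeasure ρ] (η : ℝ) (σ : ℝ≥0) :
    ∫ u, charFun ρ u ∂gaussianReal η (σ ^ 2) =
      ∫ x, Complex.exp (η * x * Complex.I) * (exp (-(σ * x) ^ 2 / 2) : ℝ) ∂ρ := by
  simp_rw [charFun_apply_real]
  rw [integral_integral_swap]
  · refine integral_congr_ae (.of_forall fun x ↦ ?_)
    have charFun_gaussian := charFun_gaussianReal (μ := η) (v := σ ^ 2) x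
    rw [charFun_apply_real] at charFun_gaussian
    simp only [Complex.ofReal_exp, ← Complex.exp_add]
    convert charFun_gaussian using 2
    · congr! 3
      ring
    · push_cast
      ring
  · refine Integrable.of_bound (C := 1) (by fun_prop) (.of_forall fun p ↦ ?_)
    simp only [Function.uncurry]
    rw [← Complex.ofReal_mul, Complex.norm_exp_ofReal_mul_I]

lemma integral_norm_charFun_sq_gaussianReal (ρ : Measure ℝ) [IsFiniteMeasure ρ] (σ : ℝ≥0) :
    ∫ u, ‖charFun ρ u‖ ^ 2 ∂gaussianReal 0 (σ ^ 2) =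
      ∫ x, ∫ y, exp (-(σ * (x - y)) ^ 2 / 2) ∂ρ ∂ρ := by
  have charFun_conv_neg (u : ℝ) :
      charFun (ρ ∗ ρ.map (-1 * ·)) u = ((‖charFun ρ u‖ ^ 2 : ℝ) : ℂ) := by
    rw [charFun_conv, charFun_map_mul, neg_one_mul, charFun_neg, Complex.mul_conj,
      Complex.normSq_eq_norm_sq]
  have gaussian_avg := integral_charFun_gaussianReal (ρ ∗ ρ.map (-1 * ·)) 0 σ
  simp only [charFun_conv_neg, Complex.ofReal_zero, zero_mul, Complex.exp_zero, one_mul,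
    integral_complex_ofReal, Complex.ofReal_inj] at gaussian_avg
  rw [gaussian_avg, integral_conv]
  · refine integral_congr_ae (.of_forall fun x ↦ ?_)
    simp only
    rw [integral_map (by fun_prop) (by fun_prop)]
    simp only [neg_one_mul, ← sub_eq_add_neg]
  · refine Integrable.of_bound (C := 1) (by fun_prop) (.of_forall fun x ↦ ?_)
    rw [norm_of_nonneg (by positivity), exp_le_one_iff]
    nlinarith [sq_nonneg (σ * x)]

lemma Frostman.integral_norm_charFun_sq_gaussianReal_le {ρ : Measure ℝ} [IsFiniteMeasure ρ]
    (h : Frostman ρ id s C) (hs : s ≤ 1) {σ : ℝ≥0} (hσ : σ ≠ 0) :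
    ∫ u, ‖charFun ρ u‖ ^ 2 ∂gaussianReal 0 (σ ^ 2) ≤ 16 * C * σ ^ (-s) * ρ.real Set.univ := by
  have inner_le (x : ℝ) : ∫ y, exp (-(σ * (x - y)) ^ 2 / 2) ∂ρ ≤ 16 * C * σ ^ (-s) := by
    simpa only [id, mul_pow, sub_sq_comm] using
      h.integral_exp_neg_sq_le measurable_id hs (NNReal.coe_pos.2 (pos_of_ne_zero hσ)) x
  calc ∫ u, ‖charFun ρ u‖ ^ 2 ∂gaussianReal 0 (σ ^ 2)
      = ∫ x, ∫ y, exp (-(σ * (x - y)) ^ 2 / 2) ∂ρ ∂ρ := integral_norm_charFun_sq_gaussianReal ρ σ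
    _ ≤ ∫ _, 16 * C * σ ^ (-s) ∂ρ :=
        integral_mono_of_nonneg (.of_forall fun x ↦ integral_nonneg fun y ↦ by positivity)
          (integrable_const _) (.of_forall inner_le)
    _ = 16 * C * σ ^ (-s) * ρ.real Set.univ := by simp [mul_comm]

end Gaussian

section GaussianAveraging

variable {ν : Measure ℝ} {s C : ℝ}

lemma sq_integral_le_integral_sq {α : Type*} [MeasurableSpace α] {m : Measure α}
    [IsProbabilityMeasure m] {f : α → ℝ} (hf : MemLp f 2 m) :
    (∫ x, f x ∂m) ^ 2 ≤ ∫ x, f x ^ 2 ∂m := by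
  have := variance_nonneg f m
  rw [variance_eq_sub hf] at this
  exact sub_nonneg.1 this

lemma memLp_norm_charFun_comp {α : Type*} [MeasurableSpace α] (μ : Measure ℝ) [IsFiniteMeasure μ]
    (m : Measure α) [IsFiniteMeasure m] {g : α → ℝ} (hg : Measurable g) (p : ℝ≥0∞) :
    MemLp (fun x ↦ ‖charFun μ (g x)‖) p m :=
  MemLp.of_bound (measurable_charFun.comp hg).norm.aestronglyMeasurable (μ.real Set.univ)
    (.of_forall fun x ↦ (norm_norm _).trans_le (norm_charFun_le (g x)))

lemma exp_half_le_two : exp (1 / 2) ≤ 2 :=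
  (exp_bound_div_one_sub_of_interval (by norm_num) (by norm_num)).trans (by norm_num)

-- Weighting a measure supported in `|x| ≤ 1 / σ` by `exp ((σ x)² / 2) ≤ 2` undoes the Gaussian
-- damping caused by averaging its characteristic function.
lemma exists_le_two_smul_charFun_eq_integral (μ : Measure ℝ) [IsFiniteMeasure μ] {σ : ℝ≥0}
    (hμ : ∀ᵐ x : ℝ ∂μ, |σ * x| ≤ 1) :
    ∃ ρ ≤ (2 : ℝ≥0) • μ, ∀ η, charFun μ η = ∫ u, charFun ρ u ∂gaussianReal η (σ ^ 2) := by
  set w : ℝ → ℝ≥0 := fun x ↦ (exp ((σ * x) ^ 2 / 2)).toNNReal with hw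
  have w_meas : Measurable w := by fun_prop
  have w_le : ∀ᵐ x ∂μ, w x ≤ 2 := by
    filter_upwards [hμ] with x hx
    refine toNNReal_le_iff_le_coe.2 ((exp_le_exp.2 ?_).trans exp_half_le_two)
    gcongr
    exact (sq_le_one_iff_abs_le_one _).2 hx
  have hρ : μ.withDensity (fun x ↦ w x) ≤ (2 : ℝ≥0) • μ := by
    refine (withDensity_mono (w_le.mono fun x hx ↦ ENNReal.coe_le_coe.2 hx)).trans_eq ?_
    exact withDensity_const _
  have := isFiniteMeasure_of_le _ hρ
  refine ⟨_, hρ, fun η ↦ ?_⟩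
  rw [integral_charFun_gaussianReal, integral_withDensity_eq_integral_smul w_meas,
    charFun_apply_real]
  refine integral_congr_ae (.of_forall fun x ↦ ?_)
  have weight_mul_damping : (w x : ℝ) * exp (-(σ * x) ^ 2 / 2) = 1 := by
    rw [hw, coe_toNNReal _ (exp_pos _).le, ← exp_add, neg_div, add_neg_cancel, exp_zero]
  simp only [NNReal.smul_def, Complex.real_smul]
  rw [mul_left_comm, ← Complex.ofReal_mul (w x), weight_mul_damping, Complex.ofReal_one, mul_one]

lemma exists_le_two_smul_norm_charFun_sq_le (μ : Measure ℝ) [IsFiniteMeasure μ] {σ : ℝ≥0}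
    (hμ : ∀ᵐ x : ℝ ∂μ, |σ * x| ≤ 1) :
    ∃ ρ ≤ (2 : ℝ≥0) • μ, ∀ η,
      ‖charFun μ η‖ ^ 2 ≤ ∫ u, ‖charFun ρ u‖ ^ 2 ∂gaussianReal η (σ ^ 2) := by
  obtain ⟨ρ, hρ, charFun_eq⟩ := exists_le_two_smul_charFun_eq_integral μ hμ
  have := isFiniteMeasure_of_le _ hρ
  refine ⟨ρ, hρ, fun η ↦ ?_⟩
  calc ‖charFun μ η‖ ^ 2 ≤ (∫ u, ‖charFun ρ u‖ ∂gaussianReal η (σ ^ 2)) ^ 2 := by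
        rw [charFun_eq]
        gcongr
        exact norm_integral_le_integral_norm _
    _ ≤ ∫ u, ‖charFun ρ u‖ ^ 2 ∂gaussianReal η (σ ^ 2) :=
        sq_integral_le_integral_sq (memLp_norm_charFun_comp ρ _ measurable_id 2)

lemma exp_neg_sub_sq_div_le {σ τ η : ℝ} (hσ : 0 < σ) (hστ : 2 * σ ≤ τ) (hη : 2 * η ^ 2 ≤ τ ^ 2)
    (u : ℝ) :
    exp (-(u - η) ^ 2 / (2 * σ ^ 2)) ≤
      2 * (exp (-u ^ 2 / (2 * τ ^ 2)) * exp (-((u - η) / (2 * σ)) ^ 2 / 2)) := by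
  have hτ : 0 < τ := by linarith
  set q := (u - η) ^ 2 / (2 * σ) ^ 2 with hq
  have sq_le : u ^ 2 / (2 * τ ^ 2) ≤ q + 1 / 2 := by
    calc u ^ 2 / (2 * τ ^ 2) ≤ (2 * (u - η) ^ 2 + 2 * η ^ 2) / (2 * τ ^ 2) := by
          gcongr
          nlinarith [sq_nonneg (u - 2 * η)]
      _ = (u - η) ^ 2 / τ ^ 2 + (2 * η ^ 2) / τ ^ 2 / 2 := by
          field_simp
      _ ≤ q + 1 / 2 := by
          rw [hq]
          gcongr
          exact div_le_one_of_le₀ hη (by positivity)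
  refine le_trans ?_ (mul_le_mul_of_nonneg_right exp_half_le_two (by positivity))
  rw [← exp_add, ← exp_add, exp_le_exp]
  have h₁ : -(u - η) ^ 2 / (2 * σ ^ 2) = -2 * q := by
    rw [hq]
    field_simp
  have h₂ : -((u - η) / (2 * σ)) ^ 2 / 2 = -(1 / 2) * q := by
    rw [hq]
    ring
  have hq_nonneg : 0 ≤ q := by positivity
  rw [h₁, h₂, neg_div]
  linarith

lemma gaussianPDFReal_sq (η : ℝ) (σ : ℝ≥0) (u : ℝ) :
    gaussianPDFReal η (σ ^ 2) u = (√(2 * π) * σ)⁻¹ * exp (-(u - η) ^ 2 / (2 * σ ^ 2)) := by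
  rw [gaussianPDFReal, NNReal.coe_pow, sqrt_mul (by positivity), sqrt_sq σ.coe_nonneg]

lemma gaussianPDFReal_le_mul_exp {σ τ : ℝ≥0} (hσ : σ ≠ 0) (hστ : 2 * σ ≤ τ) {η : ℝ}
    (hη : 2 * η ^ 2 ≤ τ ^ 2) (u : ℝ) :
    gaussianPDFReal η (σ ^ 2) u ≤
      2 * (τ / σ) * gaussianPDFReal 0 (τ ^ 2) u * exp (-((u - η) / (2 * σ)) ^ 2 / 2) := by
  have hσ' : (0 : ℝ) < σ := by positivity
  have hστ' : 2 * (σ : ℝ) ≤ τ := by exact_mod_cast hστ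
  have hτ' : (0 : ℝ) < τ := by linarith
  rw [gaussianPDFReal_sq, gaussianPDFReal_sq, sub_zero]
  calc (√(2 * π) * σ)⁻¹ * exp (-(u - η) ^ 2 / (2 * σ ^ 2))
      ≤ (√(2 * π) * σ)⁻¹ *
          (2 * (exp (-u ^ 2 / (2 * τ ^ 2)) * exp (-((u - η) / (2 * σ)) ^ 2 / 2))) := by
        gcongr
        exact exp_neg_sub_sq_div_le hσ' hστ' hη u
    _ = 2 * (τ / σ) * ((√(2 * π) * τ)⁻¹ * exp (-u ^ 2 / (2 * τ ^ 2))) *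
          exp (-((u - η) / (2 * σ)) ^ 2 / 2) := by
        have cancel : (√(2 * π) * σ)⁻¹ = τ / σ * (√(2 * π) * τ)⁻¹ := by field_simp
        rw [cancel]
        ring

lemma Frostman.lintegral_gaussianPDFReal_le [IsFiniteMeasure ν] (h : Frostman ν id s C)
    (hs : s ≤ 1) {σ τ : ℝ≥0} (hσ : σ ≠ 0) (hστ : 2 * σ ≤ τ) {c z : ℝ} (hc : c ≠ 0)
    (hν : ∀ᵐ y ∂ν, 2 * (c * (y - z)) ^ 2 ≤ τ ^ 2) (u : ℝ) :
    ∫⁻ y, ENNReal.ofReal (gaussianPDFReal (c * (y - z)) (σ ^ 2) u) ∂ν ≤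
      ENNReal.ofReal (2 * (τ / σ) * (16 * C * (|c| / (2 * σ)) ^ (-s))) *
        ENNReal.ofReal (gaussianPDFReal 0 (τ ^ 2) u) := by
  have hpdf := gaussianPDFReal_nonneg 0 (τ ^ 2) u
  have recenter (y : ℝ) : exp (-((u - c * (y - z)) / (2 * σ)) ^ 2 / 2) =
      exp (-(|c| / (2 * σ) * (y - (z + u / c))) ^ 2 / 2) := by
    rw [mul_pow, div_pow |c|, sq_abs]
    congr 3
    field_simp
    ring
  calc ∫⁻ y, ENNReal.ofReal (gaussianPDFReal (c * (y - z)) (σ ^ 2) u) ∂ν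
      ≤ ∫⁻ y, ENNReal.ofReal (2 * (τ / σ) * gaussianPDFReal 0 (τ ^ 2) u) *
          ENNReal.ofReal (exp (-(|c| / (2 * σ) * (y - (z + u / c))) ^ 2 / 2)) ∂ν := by
        refine lintegral_mono_ae (hν.mono fun y hy ↦ ?_)
        rw [← ENNReal.ofReal_mul (by positivity), ← recenter]
        exact ENNReal.ofReal_le_ofReal (gaussianPDFReal_le_mul_exp hσ hστ hy u)
    _ ≤ ENNReal.ofReal (2 * (τ / σ) * gaussianPDFReal 0 (τ ^ 2) u) *
          ENNReal.ofReal (16 * C * (|c| / (2 * σ)) ^ (-s)) := by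
        rw [lintegral_const_mul _ (by fun_prop)]
        gcongr
        exact h.lintegral_exp_neg_sq_le measurable_id hs (by positivity) _
    _ = _ := by
        rw [← ENNReal.ofReal_mul (by positivity), ← ENNReal.ofReal_mul' hpdf]
        congr 1
        ring

lemma lintegral_gaussianReal_sq (η : ℝ) {σ : ℝ≥0} (hσ : σ ≠ 0) {f : ℝ → ℝ≥0∞} (hf : Measurable f) :
    ∫⁻ u, f u ∂gaussianReal η (σ ^ 2) =
      ∫⁻ u, ENNReal.ofReal (gaussianPDFReal η (σ ^ 2) u) * f u := by
  rw [gaussianReal_of_var_ne_zero _ (pow_ne_zero 2 hσ),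
    lintegral_withDensity_eq_lintegral_mul _ (measurable_gaussianPDF _ _) hf]
  rfl

lemma Frostman.lintegral_gaussianReal_le [IsFiniteMeasure ν] (h : Frostman ν id s C)
    (hs : s ≤ 1) {σ τ : ℝ≥0} (hσ : σ ≠ 0) (hστ : 2 * σ ≤ τ) {c z : ℝ} (hc : c ≠ 0)
    (hν : ∀ᵐ y ∂ν, 2 * (c * (y - z)) ^ 2 ≤ τ ^ 2) {f : ℝ → ℝ≥0∞} (hf : Measurable f) :
    ∫⁻ y, ∫⁻ u, f u ∂gaussianReal (c * (y - z)) (σ ^ 2) ∂ν ≤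
      ENNReal.ofReal (2 * (τ / σ) * (16 * C * (|c| / (2 * σ)) ^ (-s))) *
        ∫⁻ u, f u ∂gaussianReal 0 (τ ^ 2) := by
  have hτ : τ ≠ 0 := fun h ↦ hσ (by simpa [h] using hστ)
  set K := ENNReal.ofReal (2 * (τ / σ) * (16 * C * (|c| / (2 * σ)) ^ (-s)))
  set p : ℝ → ℝ → ℝ≥0∞ := fun y u ↦ ENNReal.ofReal (gaussianPDFReal (c * (y - z)) (σ ^ 2) u)
  have p_meas : Measurable (Function.uncurry p) := by
    unfold p Function.uncurry gaussianPDFReal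
    fun_prop
  calc ∫⁻ y, ∫⁻ u, f u ∂gaussianReal (c * (y - z)) (σ ^ 2) ∂ν
      = ∫⁻ y, (∫⁻ u, p y u * f u) ∂ν := by simp only [lintegral_gaussianReal_sq _ hσ hf, p]
    _ = ∫⁻ u, (∫⁻ y, p y u ∂ν) * f u := by
        rw [lintegral_lintegral_swap (p_meas.mul (hf.comp measurable_snd)).aemeasurable]
        exact lintegral_congr fun u ↦ lintegral_mul_const _ p_meas.of_uncurry_right
    _ ≤ ∫⁻ u, K * (ENNReal.ofReal (gaussianPDFReal 0 (τ ^ 2) u) * f u) := by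
        refine lintegral_mono fun u ↦ ?_
        rw [← mul_assoc]
        gcongr
        exact h.lintegral_gaussianPDFReal_le hs hσ hστ hc hν u
    _ = K * ∫⁻ u, f u ∂gaussianReal 0 (τ ^ 2) := by
        rw [lintegral_const_mul _ (by fun_prop), lintegral_gaussianReal_sq _ hτ hf]

end GaussianAveraging

section FourierDecay

variable {μ ν : Measure ℝ} {s₁ s₂ C₁ C₂ R c z : ℝ}

lemma Frostman.integral_norm_charFun_sq_le_mul [IsProbabilityMeasure μ] [IsFiniteMeasure ν]
    (hμF : Frostman μ id s₁ C₁) (hs₁ : s₁ ≤ 1) (hνF : Frostman ν id s₂ C₂) (hs₂ : s₂ ≤ 1)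
    {σ τ : ℝ≥0} (hσ : σ ≠ 0) (hστ : 2 * σ ≤ τ) (hμ : ∀ᵐ x : ℝ ∂μ, |σ * x| ≤ 1) (hc : c ≠ 0)
    (hν : ∀ᵐ y ∂ν, 2 * (c * (y - z)) ^ 2 ≤ τ ^ 2) :
    ∫ y, ‖charFun μ (c * (y - z))‖ ^ 2 ∂ν ≤
      2 * (τ / σ) * (16 * C₂ * (|c| / (2 * σ)) ^ (-s₂)) * (64 * C₁ * τ ^ (-s₁)) := by
  have hC₁ := hμF.nonneg
  have hC₂ := hνF.nonneg
  have hτ : τ ≠ 0 := fun h ↦ hσ (by simpa [h] using hστ)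
  obtain ⟨ρ, hρ, charFun_sq_le⟩ := exists_le_two_smul_norm_charFun_sq_le μ hμ
  have := isFiniteMeasure_of_le _ hρ
  have sq_integrable (m : Measure ℝ) [IsFiniteMeasure m] :
      Integrable (fun u ↦ ‖charFun ρ u‖ ^ 2) m :=
    (memLp_norm_charFun_comp ρ m measurable_id 2).integrable_sq
  have ρ_mass : ρ.real Set.univ ≤ 2 := by
    refine (ENNReal.toReal_mono (measure_ne_top _ _) (hρ Set.univ)).trans_eq ?_
    simp
  have ρ_bound : ∫ u, ‖charFun ρ u‖ ^ 2 ∂gaussianReal 0 (τ ^ 2) ≤ 64 * C₁ * τ ^ (-s₁) := by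
    calc ∫ u, ‖charFun ρ u‖ ^ 2 ∂gaussianReal 0 (τ ^ 2)
        ≤ 16 * (2 * C₁) * τ ^ (-s₁) * ρ.real Set.univ :=
          (hμF.of_le_smul hρ).integral_norm_charFun_sq_gaussianReal_le hs₁ hτ
      _ ≤ 16 * (2 * C₁) * τ ^ (-s₁) * 2 := by gcongr
      _ = 64 * C₁ * τ ^ (-s₁) := by ring
  refine le_trans ?_ (mul_le_mul_of_nonneg_left ρ_bound (by positivity))
  rw [← ENNReal.ofReal_le_ofReal_iff (by positivity), ENNReal.ofReal_mul (by positivity),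
    ofReal_integral_eq_lintegral_ofReal
      (memLp_norm_charFun_comp μ ν (by fun_prop) 2).integrable_sq (.of_forall fun _ ↦ sq_nonneg _),
    ofReal_integral_eq_lintegral_ofReal (sq_integrable _) (.of_forall fun _ ↦ sq_nonneg _)]
  refine le_trans (lintegral_mono fun y ↦ ?_) (hνF.lintegral_gaussianReal_le hs₂ hσ hστ hc hν
    (measurable_charFun.norm.pow_const 2).ennreal_ofReal)
  rw [← ofReal_integral_eq_lintegral_ofReal (sq_integrable _) (.of_forall fun _ ↦ sq_nonneg _)]
  exact ENNReal.ofReal_le_ofReal (charFun_sq_le _)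

lemma div_two_rpow_neg_le {x s : ℝ} (hx : 0 ≤ x) (hs : s ≤ 1) : (x / 2) ^ (-s) ≤ 2 * x ^ (-s) := by
  have two_rpow_le : (2 : ℝ) ^ s ≤ 2 := rpow_le_self_of_one_le one_le_two hs
  calc (x / 2) ^ (-s) = 2 ^ s * x ^ (-s) := by
        rw [div_rpow hx zero_le_two, rpow_neg zero_le_two, div_inv_eq_mul, mul_comm]
    _ ≤ 2 * x ^ (-s) := by gcongr

lemma Frostman.integral_norm_charFun_sq_le_of_abs_le [IsProbabilityMeasure μ] [IsFiniteMeasure ν]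
    (hμF : Frostman μ id s₁ C₁) (hs₁ : s₁ ≤ 1) (hνF : Frostman ν id s₂ C₂) (hs₂ : s₂ ≤ 1)
    (hR : 1 ≤ R) (hμ : ∀ᵐ x ∂μ, |x| ≤ R) (hν : ∀ᵐ y ∂ν, |y| ≤ R) (hz : |z| ≤ R) (hc : 1 ≤ |c|) :
    ∫ y, ‖charFun μ (c * (y - z))‖ ^ 2 ∂ν ≤
      2 * (4 * R * |c| * R) * (16 * C₂ * (|c| * R / 2) ^ (-s₂)) *
        (64 * C₁ * (4 * R * |c|) ^ (-s₁)) := by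
  lift R to ℝ≥0 using by linarith
  have hR₀ : R ≠ 0 := by
    rintro rfl
    norm_num at hR
  have hστ : 2 * R⁻¹ ≤ 4 * R * ‖c‖₊ := by
    rw [← NNReal.coe_le_coe]
    push_cast
    rw [norm_eq_abs]
    nlinarith [inv_le_one_of_one_le₀ hR]
  have hμσ : ∀ᵐ x : ℝ ∂μ, |(R⁻¹ : ℝ≥0) * x| ≤ 1 := by
    filter_upwards [hμ] with x hx
    rw [abs_mul, NNReal.abs_eq, NNReal.coe_inv]
    exact inv_mul_le_one_of_le₀ hx (by positivity)
  have hντ : ∀ᵐ y ∂ν, 2 * (c * (y - z)) ^ 2 ≤ (4 * R * ‖c‖₊ : ℝ≥0) ^ 2 := by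
    filter_upwards [hν] with y hy
    have sub_le : |y - z| ≤ 2 * R := (abs_sub _ _).trans (by linarith)
    push_cast
    rw [norm_eq_abs]
    calc 2 * (c * (y - z)) ^ 2 = 2 * (|c| * |y - z|) ^ 2 := by rw [← abs_mul, sq_abs]
      _ ≤ 2 * (|c| * (2 * R)) ^ 2 := by gcongr
      _ ≤ (4 * R * |c|) ^ 2 := by nlinarith [sq_nonneg (R * |c|)]
  refine (hμF.integral_norm_charFun_sq_le_mul hs₁ hνF hs₂ (inv_ne_zero hR₀) hστ hμσ
    (abs_pos.1 (by linarith)) hντ).trans_eq ?_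
  have half_mul : |c| / (2 * (R : ℝ)⁻¹) = |c| * R / 2 := by field_simp
  push_cast
  rw [norm_eq_abs, div_inv_eq_mul, half_mul]

lemma Frostman.integral_norm_charFun_sq_le [IsProbabilityMeasure μ] [IsFiniteMeasure ν]
    (hμF : Frostman μ id s₁ C₁) (hs₁ : s₁ ∈ Set.Icc 0 1) (hνF : Frostman ν id s₂ C₂)
    (hs₂ : s₂ ∈ Set.Icc 0 1) (hR : 1 ≤ R) (hμ : ∀ᵐ x ∂μ, |x| ≤ R) (hν : ∀ᵐ y ∂ν, |y| ≤ R)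
    (hz : |z| ≤ R) (hc : 1 ≤ |c|) :
    ∫ y, ‖charFun μ (c * (y - z))‖ ^ 2 ∂ν ≤
      2 ^ 14 * (C₁ * C₂) * R ^ 2 * |c| ^ (1 - s₁ - s₂) := by
  have hC₁ := hμF.nonneg
  have hC₂ := hνF.nonneg
  have hc₀ : 0 < |c| := by linarith
  have rpow_s₂_le : (|c| * R / 2) ^ (-s₂) ≤ 2 * |c| ^ (-s₂) := by
    refine le_trans ?_ (div_two_rpow_neg_le hc₀.le hs₂.2)
    refine rpow_le_rpow_of_nonpos (by positivity) ?_ (neg_nonpos.2 hs₂.1)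
    gcongr
    exact le_mul_of_one_le_right hc₀.le hR
  have rpow_s₁_le : (4 * R * |c|) ^ (-s₁) ≤ |c| ^ (-s₁) :=
    rpow_le_rpow_of_nonpos hc₀ (le_mul_of_one_le_left hc₀.le (by linarith)) (neg_nonpos.2 hs₁.1)
  calc ∫ y, ‖charFun μ (c * (y - z))‖ ^ 2 ∂ν
      ≤ 2 * (4 * R * |c| * R) * (16 * C₂ * (|c| * R / 2) ^ (-s₂)) *
          (64 * C₁ * (4 * R * |c|) ^ (-s₁)) :=
        hμF.integral_norm_charFun_sq_le_of_abs_le hs₁.2 hνF hs₂.2 hR hμ hν hz hc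
    _ ≤ 2 * (4 * R * |c| * R) * (16 * C₂ * (2 * |c| ^ (-s₂))) * (64 * C₁ * |c| ^ (-s₁)) := by
        gcongr
    _ = 2 ^ 14 * (C₁ * C₂) * R ^ 2 * (|c| * |c| ^ (-s₁) * |c| ^ (-s₂)) := by ring
    _ = 2 ^ 14 * (C₁ * C₂) * R ^ 2 * |c| ^ (1 - s₁ - s₂) := by
        rw [sub_eq_add_neg, sub_eq_add_neg, rpow_add hc₀, rpow_add hc₀, rpow_one]

end FourierDecay

section Concentration

variable {μ ν ζ : Measure ℝ} {s s₁ s₂ C C₁ C₂ R b c M : ℝ} {σ : ℝ≥0}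

lemma Frostman.integral_norm_charFun_le [IsProbabilityMeasure μ] [IsProbabilityMeasure ν]
    (hμF : Frostman μ id s₁ C₁) (hs₁ : s₁ ∈ Set.Icc 0 1) (hνF : Frostman ν id s₂ C₂)
    (hs₂ : s₂ ∈ Set.Icc 0 1) (hR : 1 ≤ R) (hμ : ∀ᵐ x ∂μ, |x| ≤ R) (hν : ∀ᵐ y ∂ν, |y| ≤ R)
    {z : ℝ} (hz : |z| ≤ R) (hc : 1 ≤ |c|) :
    ∫ y, ‖charFun μ (c * (y - z))‖ ∂ν ≤
      2 ^ 7 * √(C₁ * C₂) * R * |c| ^ ((1 - s₁ - s₂) / 2) := by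
  have hC : 0 ≤ C₁ * C₂ := mul_nonneg hμF.nonneg hνF.nonneg
  have rpow_half_sq : (|c| ^ ((1 - s₁ - s₂) / 2)) ^ 2 = |c| ^ (1 - s₁ - s₂) := by
    rw [← rpow_mul_natCast (abs_nonneg c)]
    norm_num
  refine le_of_sq_le_sq ?_ (by positivity)
  calc (∫ y, ‖charFun μ (c * (y - z))‖ ∂ν) ^ 2
      ≤ ∫ y, ‖charFun μ (c * (y - z))‖ ^ 2 ∂ν :=
        sq_integral_le_integral_sq (memLp_norm_charFun_comp μ ν (by fun_prop) 2)
    _ ≤ 2 ^ 14 * (C₁ * C₂) * R ^ 2 * |c| ^ (1 - s₁ - s₂) :=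
        hμF.integral_norm_charFun_sq_le hs₁ hνF hs₂ hR hμ hν hz hc
    _ = (2 ^ 7 * √(C₁ * C₂) * R * |c| ^ ((1 - s₁ - s₂) / 2)) ^ 2 := by
        simp only [mul_pow, sq_sqrt hC, rpow_half_sq]
        norm_num

lemma Frostman.integral_integral_norm_charFun_le [IsProbabilityMeasure μ] [IsProbabilityMeasure ν]
    (hμF : Frostman μ id s₁ C₁) (hs₁ : s₁ ∈ Set.Icc 0 1) (hνF : Frostman ν id s₂ C₂)
    (hs₂ : s₂ ∈ Set.Icc 0 1) (hR : 1 ≤ R) (hμ : ∀ᵐ x ∂μ, |x| ≤ R) (hν : ∀ᵐ y ∂ν, |y| ≤ R)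
    (hc : 1 ≤ |c|) :
    ∫ z, ∫ y, ‖charFun μ (c * (y - z))‖ ∂ν ∂ν ≤
      2 ^ 7 * √(C₁ * C₂) * R * |c| ^ ((1 - s₁ - s₂) / 2) := by
  refine (integral_mono_of_nonneg (.of_forall fun z ↦ integral_nonneg fun y ↦ norm_nonneg _)
    (integrable_const _) (hν.mono fun z hz ↦
      hμF.integral_norm_charFun_le hs₁ hνF hs₂ hR hμ hν hz hc)).trans_eq ?_
  simp

lemma Frostman.integral_norm_charFun_map_const_mul_sq_le [IsProbabilityMeasure ν]
    (h : Frostman ν id s C) (hs : s ≤ 1) (hb : b ≠ 0) (hc : 0 < c) (hν : ∀ᵐ y ∂ν, c ≤ |y|)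
    (hσ : σ ≠ 0) :
    ∫ u, ‖charFun (ν.map (fun y ↦ b * y ^ 2)) u‖ ^ 2 ∂gaussianReal 0 (σ ^ 2) ≤
      32 * C * (1 / (|b| * c)) ^ s * σ ^ (-s) := by
  have hmeas : Measurable fun y : ℝ ↦ b * y ^ 2 := by fun_prop
  have := Measure.isProbabilityMeasure_map (μ := ν) hmeas.aemeasurable
  refine (((h.const_mul_sq hb hc hν).map hmeas).integral_norm_charFun_sq_gaussianReal_le
    hs hσ).trans_eq ?_
  rw [probReal_univ]
  ring

lemma measureReal_abs_mul_le_one_le_integral_norm_charFun (ζ : Measure ℝ) [IsFiniteMeasure ζ]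
    (σ : ℝ≥0) :
    ζ.real {z | |σ * z| ≤ 1} ≤ 2 * ∫ u, ‖charFun ζ u‖ ∂gaussianReal 0 (σ ^ 2) := by
  have meas : MeasurableSet {z : ℝ | |σ * z| ≤ 1} := measurableSet_le (by fun_prop) (by fun_prop)
  have exp_le_one (z : ℝ) : exp (-(σ * z) ^ 2 / 2) ≤ 1 :=
    exp_le_one_iff.2 (by nlinarith [sq_nonneg (σ * z)])
  have integrable_exp : Integrable (fun z : ℝ ↦ exp (-(σ * z) ^ 2 / 2)) ζ :=
    .of_bound (C := 1) (by fun_prop) (.of_forall fun z ↦ by simpa using exp_le_one z)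
  have one_le_exp {z : ℝ} (hz : |σ * z| ≤ 1) : 1 ≤ 2 * exp (-(σ * z) ^ 2 / 2) := by
    have sq_le := (sq_le_one_iff_abs_le_one _).2 hz
    calc (1 : ℝ) = exp (1 / 2) * exp (-1 / 2) := by rw [← exp_add]; norm_num
      _ ≤ 2 * exp (-(σ * z) ^ 2 / 2) := by
        gcongr
        exact exp_half_le_two
  calc ζ.real {z | |σ * z| ≤ 1} = ∫ z, {z : ℝ | |σ * z| ≤ 1}.indicator 1 z ∂ζ :=
        (integral_indicator_one meas).symm
    _ ≤ ∫ z, 2 * exp (-(σ * z) ^ 2 / 2) ∂ζ := by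
        refine integral_mono ((integrable_const 1).indicator meas) (integrable_exp.const_mul 2)
          (Set.indicator_le' (fun z hz ↦ one_le_exp hz) fun z _ ↦ by positivity)
    _ = 2 * ‖∫ u, charFun ζ u ∂gaussianReal 0 (σ ^ 2)‖ := by
        simp only [integral_charFun_gaussianReal, Complex.ofReal_zero, zero_mul, Complex.exp_zero,
          one_mul, integral_complex_ofReal, Complex.norm_real, integral_const_mul]
        rw [norm_of_nonneg (integral_nonneg fun z ↦ by positivity)]
    _ ≤ 2 * ∫ u, ‖charFun ζ u‖ ∂gaussianReal 0 (σ ^ 2) := by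
        gcongr
        exact norm_integral_le_integral_norm _

lemma measureReal_abs_mul_le_one_le_of_norm_charFun_le [IsProbabilityMeasure ζ] {g : ℝ → ℝ}
    (hσ : σ ≠ 0) (hM : 0 < M) (hg : ∀ u, 0 ≤ g u) (hgi : Integrable g (gaussianReal 0 (σ ^ 2)))
    (hζ : ∀ u, M ≤ |u| → ‖charFun ζ u‖ ≤ g u) :
    ζ.real {z | |σ * z| ≤ 1} ≤ 2 * (M / σ + ∫ u, g u ∂gaussianReal 0 (σ ^ 2)) := by
  set S : Set ℝ := Metric.ball 0 M
  have integrable_indicator : Integrable (S.indicator fun _ ↦ (1 : ℝ)) (gaussianReal 0 (σ ^ 2)) :=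
    (integrable_const 1).indicator measurableSet_ball
  have low_frequency : (gaussianReal 0 (σ ^ 2)).real S ≤ M / σ :=
    (frostman_gaussianReal 0 hσ 0 M hM).trans_eq (by rw [rpow_one, one_div_mul_eq_div])
  have norm_charFun_le_add (u : ℝ) : ‖charFun ζ u‖ ≤ S.indicator (fun _ ↦ 1) u + g u := by
    by_cases hu : u ∈ S
    · rw [Set.indicator_of_mem hu]
      exact (norm_charFun_le_one u).trans (le_add_of_nonneg_right (hg u))
    · rw [Set.indicator_of_notMem hu, zero_add]
      exact hζ u (by simpa [S] using hu)
  refine (measureReal_abs_mul_le_one_le_integral_norm_charFun ζ σ).trans ?_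
  gcongr
  calc ∫ u, ‖charFun ζ u‖ ∂gaussianReal 0 (σ ^ 2)
      ≤ ∫ u, (S.indicator (fun _ ↦ 1) u + g u) ∂gaussianReal 0 (σ ^ 2) :=
        integral_mono_of_nonneg (.of_forall fun u ↦ norm_nonneg _) (integrable_indicator.add hgi)
          (.of_forall norm_charFun_le_add)
    _ = (gaussianReal 0 (σ ^ 2)).real S + ∫ u, g u ∂gaussianReal 0 (σ ^ 2) := by
        rw [integral_add integrable_indicator hgi, integral_indicator_const _ measurableSet_ball,
          smul_eq_mul, mul_one]
    _ ≤ M / σ + ∫ u, g u ∂gaussianReal 0 (σ ^ 2) := by gcongr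

end Concentration

section Collision

variable {μ ν : Measure ℝ} {s s₁ s₂ C₁ C₂ R a b c r : ℝ}

/-- For `p = (((y, w), x), (y', w'))` this is `a x'² + b w'² - (a x² + b w²)` with
`x' = x + y - y'`: the change of the diagonal form between two samples `(x, y, w)` and
`(x', y', w')` for which `x + y = x' + y'`. -/
def collisionPhase (a b : ℝ) (p : ((ℝ × ℝ) × ℝ) × (ℝ × ℝ)) : ℝ :=
  a * ((p.1.1.1 - p.2.1) ^ 2 + 2 * p.1.2 * (p.1.1.1 - p.2.1)) + b * p.2.2 ^ 2 - b * p.1.1.2 ^ 2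

@[fun_prop]
lemma measurable_collisionPhase (a b : ℝ) : Measurable (collisionPhase a b) := by
  unfold collisionPhase
  fun_prop

lemma integral_cexp_collisionPhase (μ : Measure ℝ) (a b ξ y w y' w' : ℝ) :
    ∫ x, Complex.exp (ξ * collisionPhase a b (((y, w), x), (y', w')) * Complex.I) ∂μ =
      Complex.exp (ξ * (a * (y - y') ^ 2) * Complex.I) * charFun μ (2 * a * ξ * (y - y')) *
        starRingEnd ℂ (Complex.exp (ξ * (b * w ^ 2) * Complex.I)) *
          Complex.exp (ξ * (b * w' ^ 2) * Complex.I) := by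
  simp_rw [charFun_apply_real, ← Complex.exp_conj, mul_right_comm _ (∫ _, _ ∂μ),
    ← integral_const_mul]
  refine integral_congr_ae (.of_forall fun x ↦ ?_)
  simp only [← Complex.exp_add, collisionPhase, map_mul, map_pow, Complex.conj_ofReal,
    Complex.conj_I]
  congr 1
  push_cast
  ring

lemma charFun_map_collisionPhase (μ ν : Measure ℝ) [IsProbabilityMeasure μ]
    [IsProbabilityMeasure ν] (a b ξ : ℝ) :
    charFun ((((ν.prod ν).prod μ).prod (ν.prod ν)).map (collisionPhase a b)) ξ =
      (∫ y', ∫ y, Complex.exp (ξ * (a * (y - y') ^ 2) * Complex.I) *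
        charFun μ (2 * a * ξ * (y - y')) ∂ν ∂ν) *
          ‖charFun (ν.map (fun y ↦ b * y ^ 2)) ξ‖ ^ 2 := by
  have integrable_cexp {α : Type} [MeasurableSpace α] (m : Measure α) [IsFiniteMeasure m]
      {g : α → ℝ} (hg : Measurable g) : Integrable (fun x ↦ Complex.exp (ξ * g x * Complex.I)) m :=
    .of_bound (C := 1) (by fun_prop) (.of_forall fun x ↦ by
      rw [← Complex.ofReal_mul, Complex.norm_exp_ofReal_mul_I])
  have hphase := measurable_collisionPhase a b
  rw [charFun_apply_real, integral_map hphase.aemeasurable (by fun_prop),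
    integral_prod_symm _ (integrable_cexp _ hphase)]
  set F : ℝ → ℝ → ℂ := fun y' y ↦
    Complex.exp (ξ * (a * (y - y') ^ 2) * Complex.I) * charFun μ (2 * a * ξ * (y - y'))
  set e : ℝ → ℂ := fun w ↦ Complex.exp (ξ * (b * w ^ 2) * Complex.I)
  have inner_eq (k : ℝ × ℝ) :
      ∫ p, Complex.exp (ξ * collisionPhase a b (p, k) * Complex.I) ∂(ν.prod ν).prod μ =
        (∫ y, F k.1 y ∂ν) * ((starRingEnd ℂ) (∫ w, e w ∂ν) * e k.2) := by
    rw [integral_prod _ (integrable_cexp _ (g := fun p ↦ collisionPhase a b (p, k)) (by fun_prop)),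
      ← integral_conj, ← mul_assoc, ← integral_prod_mul, ← integral_mul_const]
    exact integral_congr_ae (.of_forall fun q ↦ integral_cexp_collisionPhase μ a b ξ _ _ _ _)
  have charFun_eq : charFun (ν.map (fun y ↦ b * y ^ 2)) ξ = ∫ w, e w ∂ν := by
    rw [charFun_apply_real, integral_map (by fun_prop) (by fun_prop)]
    simp only [e, Complex.ofReal_mul, Complex.ofReal_pow]
  simp_rw [inner_eq]
  rw [charFun_eq, ← Complex.conj_mul', ← integral_const_mul]
  exact integral_prod_mul (fun y' ↦ ∫ y, F y' y ∂ν) fun w ↦ (starRingEnd ℂ) (∫ w, e w ∂ν) * e w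

lemma norm_charFun_map_collisionPhase_le (μ ν : Measure ℝ) [IsProbabilityMeasure μ]
    [IsProbabilityMeasure ν] (a b ξ : ℝ) :
    ‖charFun ((((ν.prod ν).prod μ).prod (ν.prod ν)).map (collisionPhase a b)) ξ‖ ≤
      (∫ y', ∫ y, ‖charFun μ (2 * a * ξ * (y - y'))‖ ∂ν ∂ν) *
        ‖charFun (ν.map (fun y ↦ b * y ^ 2)) ξ‖ ^ 2 := by
  have norm_eq (y' y : ℝ) : ‖Complex.exp (ξ * (a * (y - y') ^ 2) * Complex.I) *
      charFun μ (2 * a * ξ * (y - y'))‖ = ‖charFun μ (2 * a * ξ * (y - y'))‖ := by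
    rw [norm_mul]
    norm_cast
    rw [Complex.norm_exp_ofReal_mul_I, one_mul]
  have integrable_norm : Integrable
      (fun y' ↦ ∫ y, ‖charFun μ (2 * a * ξ * (y - y'))‖ ∂ν) ν :=
    ((memLp_norm_charFun_comp μ (ν.prod ν) (g := fun p ↦ 2 * a * ξ * (p.2 - p.1))
      (by fun_prop) 1).integrable le_rfl).integral_prod_left
  rw [charFun_map_collisionPhase, norm_mul, norm_pow, Complex.norm_real, norm_norm]
  gcongr
  refine norm_integral_le_of_norm_le integrable_norm (.of_forall fun y' ↦ ?_)
  exact (norm_integral_le_integral_norm _).trans_eq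
    (integral_congr_ae (.of_forall fun y ↦ norm_eq y' y))

lemma Frostman.measureReal_abs_mul_collisionPhase_le [IsProbabilityMeasure μ]
    [IsProbabilityMeasure ν] (hμF : Frostman μ id s₁ C₁) (hs₁ : s₁ ∈ Set.Icc 0 1)
    (hνF : Frostman ν id s₂ C₂) (hs₂ : s₂ ∈ Set.Icc 0 1) (hs : 1 ≤ s₁ + s₂) (hR : 1 ≤ R)
    (hμ : ∀ᵐ x ∂μ, |x| ≤ R) (hν : ∀ᵐ y ∂ν, |y| ≤ R) (hc : 0 < c) (hνc : ∀ᵐ y ∂ν, c ≤ |y|)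
    (ha : a ≠ 0) (hb : b ≠ 0) {L : ℝ} (hL : 1 ≤ L) {σ : ℝ≥0} (hσ : σ ≠ 0) :
    (((ν.prod ν).prod μ).prod (ν.prod ν)).real {p | |σ * collisionPhase a b p| ≤ 1} ≤
      2 * (L / (2 * |a|) / σ + 2 ^ 7 * √(C₁ * C₂) * R * L ^ ((1 - s₁ - s₂) / 2) *
        (32 * C₂ * (1 / (|b| * c)) ^ s₂ * σ ^ (-s₂))) := by
  have hphase := measurable_collisionPhase a b
  have := Measure.isProbabilityMeasure_map (μ := ((ν.prod ν).prod μ).prod (ν.prod ν))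
    hphase.aemeasurable
  have := Measure.isProbabilityMeasure_map (μ := ν) (f := fun y ↦ b * y ^ 2) (by fun_prop)
  set K : ℝ := 2 ^ 7 * √(C₁ * C₂) * R * L ^ ((1 - s₁ - s₂) / 2)
  have high_frequency (u : ℝ) (hu : L / (2 * |a|) ≤ |u|) :
      ‖charFun ((((ν.prod ν).prod μ).prod (ν.prod ν)).map (collisionPhase a b)) u‖ ≤
        K * ‖charFun (ν.map (fun y ↦ b * y ^ 2)) u‖ ^ 2 := by
    have L_le : L ≤ |2 * a * u| := by
      rw [abs_mul, abs_mul, abs_two]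
      exact (div_le_iff₀' (by positivity)).1 hu
    refine (norm_charFun_map_collisionPhase_le μ ν a b u).trans ?_
    gcongr
    refine (hμF.integral_integral_norm_charFun_le hs₁ hνF hs₂ hR hμ hν (hL.trans L_le)).trans ?_
    exact mul_le_mul_of_nonneg_left (rpow_le_rpow_of_nonpos (by linarith) L_le (by linarith))
      (by positivity)
  have concentration := measureReal_abs_mul_le_one_le_of_norm_charFun_le hσ (by positivity)
    (fun u ↦ by positivity)
    ((memLp_norm_charFun_comp _ _ measurable_id 2).integrable_sq.const_mul K) high_frequency
  rw [map_measureReal_apply hphase (measurableSet_le (by fun_prop) (by fun_prop)),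
    integral_const_mul] at concentration
  refine concentration.trans ?_
  gcongr
  exact hνF.integral_norm_charFun_map_const_mul_sq_le hs₂.2 hb hc hνc hσ

lemma abs_collisionPhase_le {p : ((ℝ × ℝ) × ℝ) × (ℝ × ℝ)} {x' : ℝ} (hR : 1 ≤ R) (hr : r ≤ 1)
    (hx' : |x'| ≤ R) (hsum : |p.1.2 + p.1.1.1 - (x' + p.2.1)| ≤ r)
    (hform : |a * p.1.2 ^ 2 + b * p.1.1.2 ^ 2 - (a * x' ^ 2 + b * p.2.2 ^ 2)| ≤ r) :
    |collisionPhase a b p| ≤ (1 + 3 * R * |a|) * r := by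
  obtain ⟨⟨⟨y, w⟩, x⟩, y', w'⟩ := p
  simp only at hsum hform
  set e := x + y - (x' + y') with he
  have abs_factor_le : |2 * x' + e| ≤ 3 * R := by
    refine (abs_add_le _ _).trans ?_
    rw [abs_mul, abs_two]
    linarith
  calc |collisionPhase a b (((y, w), x), (y', w'))|
      = |a * (e * (2 * x' + e)) - (a * x ^ 2 + b * w ^ 2 - (a * x' ^ 2 + b * w' ^ 2))| := by
        rw [collisionPhase, he]
        ring_nf
    _ ≤ |a * (e * (2 * x' + e))| + |a * x ^ 2 + b * w ^ 2 - (a * x' ^ 2 + b * w' ^ 2)| :=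
        abs_sub _ _
    _ ≤ |a| * (r * (3 * R)) + r := by
        rw [abs_mul, abs_mul]
        gcongr
        exact (abs_nonneg e).trans hsum
    _ = (1 + 3 * R * |a|) * r := by ring

lemma abs_sub_lt_inv_of_floor_mul_eq {N u v : ℝ} (hN : 0 < N) (h : ⌊N * u⌋ = ⌊N * v⌋) :
    |u - v| < N⁻¹ := by
  have := Int.abs_sub_lt_one_of_floor_eq_floor h
  rwa [← mul_sub, abs_mul, abs_of_pos hN, ← lt_inv_mul_iff₀ hN, mul_one] at this

/-- The levels of `x + y` and `a x² + b w²` at scale `1 / N`, for `p = ((y, w), x)`. -/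
noncomputable def jointLevel (a b N : ℝ) (p : (ℝ × ℝ) × ℝ) : ℤ × ℤ :=
  (⌊N * (p.2 + p.1.1)⌋, ⌊N * (a * p.2 ^ 2 + b * p.1.2 ^ 2)⌋)

@[fun_prop]
lemma measurable_jointLevel (a b N : ℝ) : Measurable (jointLevel a b N) := by
  unfold jointLevel
  fun_prop

lemma Frostman.measureReal_jointLevel_collision_le [IsProbabilityMeasure μ]
    [IsProbabilityMeasure ν] (hμF : Frostman μ id s₁ C₁) (hR : 1 ≤ R) (hμ : ∀ᵐ x ∂μ, |x| ≤ R)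
    (a b : ℝ) {N : ℝ} (hN : 1 ≤ N) :
    (((ν.prod ν).prod μ).prod ((ν.prod ν).prod μ)).real
        {q | jointLevel a b N q.1 = jointLevel a b N q.2} ≤
      C₁ * N⁻¹ ^ s₁ * (((ν.prod ν).prod μ).prod (ν.prod ν)).real
        {p | |collisionPhase a b p| ≤ (1 + 3 * R * |a|) * N⁻¹} := by
  have hN₀ : 0 < N := by linarith
  set κ := ((ν.prod ν).prod μ).prod (ν.prod ν)
  have meas_eq : MeasurableSet
      {q : ((ℝ × ℝ) × ℝ) × ((ℝ × ℝ) × ℝ) | jointLevel a b N q.1 = jointLevel a b N q.2} :=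
    measurableSet_eq_fun (by fun_prop) (by fun_prop)
  have abs_le : ∀ᵐ q ∂κ.prod μ, |q.2| ≤ R := Measure.quasiMeasurePreserving_snd.ae hμ
  rw [← (measurePreserving_prodAssoc ((ν.prod ν).prod μ) (ν.prod ν) μ).measureReal_preimage
    meas_eq.nullMeasurableSet]
  refine le_trans ?_ (hμF.measureReal_prod_dist_lt_le (κ := κ)
    (g := fun p ↦ p.1.2 + p.1.1.1 - p.2.1) (by fun_prop)
    (measurableSet_le (by fun_prop) (by fun_prop)) (inv_pos.2 hN₀))
  refine ENNReal.toReal_mono (measure_ne_top _ _) (measure_mono_ae ?_)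
  filter_upwards [abs_le] with q hq hcoll
  obtain ⟨sum_eq, form_eq⟩ := Prod.ext_iff.1 hcoll
  have sum_lt := abs_sub_lt_inv_of_floor_mul_eq hN₀ sum_eq
  have form_lt := abs_sub_lt_inv_of_floor_mul_eq hN₀ form_eq
  refine ⟨abs_collisionPhase_le hR (inv_le_one_of_one_le₀ hN) hq sum_lt.le form_lt.le, ?_⟩
  rw [dist_comm, dist_eq, sub_sub, add_comm q.1.2.1]
  exact sum_lt

lemma rpow_le_of_le_of_one_le {x y t : ℝ} (hx : 0 ≤ x) (hxy : x ≤ y) (hy : 1 ≤ y)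
    (ht : t ∈ Set.Icc 0 1) : x ^ t ≤ y :=
  (rpow_le_rpow hx hxy ht.1).trans (rpow_le_self_of_one_le hy ht.2)

lemma Frostman.measureReal_abs_collisionPhase_le [IsProbabilityMeasure μ] [IsProbabilityMeasure ν]
    {Q M L N : ℝ} (hμF : Frostman μ id s₁ Q) (hs₁ : s₁ ∈ Set.Icc 0 1) (hνF : Frostman ν id s₂ Q)
    (hs₂ : s₂ ∈ Set.Icc 0 1) (hs : 1 ≤ s₁ + s₂) (hQ : 1 ≤ Q) (hμ : ∀ᵐ x ∂μ, |x| ≤ Q)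
    (hν : ∀ᵐ y ∂ν, |y| ≤ Q) (hνQ : ∀ᵐ y ∂ν, Q⁻¹ ≤ |y|) (ha : a ≠ 0) (hb : b ≠ 0)
    (hM : 1 + |a| ≤ M) (haM : |a|⁻¹ ≤ M) (hbM : |b|⁻¹ ≤ M) (hL : 1 ≤ L) (hN : 0 < N) :
    (((ν.prod ν).prod μ).prod (ν.prod ν)).real
        {p | |collisionPhase a b p| ≤ (1 + 3 * Q * |a|) * N⁻¹} ≤
      Q ^ 5 * M ^ 2 * (3 * L * N⁻¹ + 3 * 2 ^ 13 * L ^ ((1 - s₁ - s₂) / 2) * N ^ (-s₂)) := by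
  have hM₁ : 1 ≤ M := by linarith [abs_nonneg a]
  set T : ℝ := 1 + 3 * Q * |a|
  have hT₀ : 0 < T := by positivity
  have T_le : T ≤ 3 * (Q * M) := by nlinarith [abs_nonneg a]
  lift N / T to ℝ≥0 using (by positivity) with σ hσ
  have hσ₀ : σ ≠ 0 := by
    rw [← NNReal.coe_ne_zero, hσ]
    positivity
  have phase_le_iff (p) : |collisionPhase a b p| ≤ T * N⁻¹ ↔ |σ * collisionPhase a b p| ≤ 1 := by
    rw [abs_mul, NNReal.abs_eq, hσ, ← div_eq_mul_inv, le_div_iff₀' hN, div_mul_eq_mul_div,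
      div_le_one hT₀]
  have rpow_b_le : (1 / (|b| * Q⁻¹)) ^ s₂ ≤ Q * M := by
    refine rpow_le_of_le_of_one_le (by positivity) ?_ (one_le_mul_of_one_le_of_one_le hQ hM₁) hs₂
    rw [one_div, mul_inv, inv_inv, mul_comm]
    gcongr
  have rpow_σ_le : (σ : ℝ) ^ (-s₂) ≤ 3 * (Q * M) * N ^ (-s₂) := by
    rw [hσ, div_rpow hN.le hT₀.le, rpow_neg hT₀.le, div_inv_eq_mul, mul_comm]
    gcongr
    refine rpow_le_of_le_of_one_le hT₀.le T_le ?_ hs₂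
    linarith [one_le_mul_of_one_le_of_one_le hQ hM₁]
  simp_rw [phase_le_iff]
  refine (hμF.measureReal_abs_mul_collisionPhase_le hs₁ hνF hs₂ hs hQ hμ hν
    (by positivity) hνQ ha hb hL hσ₀).trans ?_
  have low_frequency_le : L / (2 * |a|) / σ ≤ 3 / 2 * (Q ^ 5 * M ^ 2 * L * N⁻¹) := by
    calc L / (2 * |a|) / σ = 1 / 2 * (|a|⁻¹ * L * T * N⁻¹) := by rw [hσ]; field_simp
      _ ≤ 1 / 2 * (M * L * (3 * (Q ^ 5 * M)) * N⁻¹) := by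
        gcongr
        refine T_le.trans ?_
        gcongr
        exact le_self_pow₀ hQ (by norm_num)
      _ = 3 / 2 * (Q ^ 5 * M ^ 2 * L * N⁻¹) := by ring
  rw [sqrt_mul_self (by positivity)]
  calc 2 * (L / (2 * |a|) / σ + 2 ^ 7 * Q * Q * L ^ ((1 - s₁ - s₂) / 2) *
        (32 * Q * (1 / (|b| * Q⁻¹)) ^ s₂ * σ ^ (-s₂)))
      ≤ 2 * (3 / 2 * (Q ^ 5 * M ^ 2 * L * N⁻¹) + 2 ^ 7 * Q * Q * L ^ ((1 - s₁ - s₂) / 2) *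
        (32 * Q * (Q * M) * (3 * (Q * M) * N ^ (-s₂)))) := by gcongr
    _ = Q ^ 5 * M ^ 2 * (3 * L * N⁻¹ + 3 * 2 ^ 13 * L ^ ((1 - s₁ - s₂) / 2) * N ^ (-s₂)) := by ring

lemma Frostman.measureReal_jointLevel_collision_le_rpow [IsProbabilityMeasure μ]
    [IsProbabilityMeasure ν] {Q M N : ℝ} (hμF : Frostman μ id s₁ Q) (hs₁ : s₁ ∈ Set.Icc 0 1)
    (hνF : Frostman ν id s₂ Q) (hs₂ : s₂ ∈ Set.Icc 0 1) (hs : s ∈ Set.Ioo (1 / 2) 1)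
    (hsum : 2 * s ≤ s₁ + s₂) (hss₁ : s - (1 - s) / 4 ≤ s₁) (hQ : 1 ≤ Q) (hμ : ∀ᵐ x ∂μ, |x| ≤ Q)
    (hν : ∀ᵐ y ∂ν, |y| ≤ Q) (hνQ : ∀ᵐ y ∂ν, Q⁻¹ ≤ |y|) (ha : a ≠ 0) (hb : b ≠ 0)
    (hM : 1 + |a| ≤ M) (haM : |a|⁻¹ ≤ M) (hbM : |b|⁻¹ ≤ M) (hN : 1 ≤ N) :
    (((ν.prod ν).prod μ).prod ((ν.prod ν).prod μ)).real
        {q | jointLevel a b N q.1 = jointLevel a b N q.2} ≤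
      2 ^ 15 * Q ^ 6 * M ^ 2 * N ^ (-2 * (s + (s - 1 / 2) * (1 - s) / 4)) := by
  obtain ⟨half_lt, lt_one⟩ := hs
  have hN₀ : 0 < N := by linarith
  -- The two frequency ranges balance when they are separated at `L = N ^ ((1 - s) / 2)`.
  set L : ℝ := N ^ ((1 - s) / 2) with hL
  have low_frequency_le :
      N⁻¹ ^ s₁ * (L * N⁻¹) ≤ N ^ (-2 * (s + (s - 1 / 2) * (1 - s) / 4)) := by
    rw [hL, inv_rpow hN₀.le, ← rpow_neg hN₀.le, ← rpow_neg_one, ← rpow_add hN₀, ← rpow_add hN₀]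
    exact rpow_le_rpow_of_exponent_le hN (by nlinarith)
  have high_frequency_le : N⁻¹ ^ s₁ * (L ^ ((1 - s₁ - s₂) / 2) * N ^ (-s₂)) ≤
      N ^ (-2 * (s + (s - 1 / 2) * (1 - s) / 4)) := by
    rw [hL, inv_rpow hN₀.le, ← rpow_neg hN₀.le, ← rpow_mul hN₀.le, ← rpow_add hN₀, ← rpow_add hN₀]
    exact rpow_le_rpow_of_exponent_le hN (by nlinarith)
  calc (((ν.prod ν).prod μ).prod ((ν.prod ν).prod μ)).real
        {q | jointLevel a b N q.1 = jointLevel a b N q.2}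
      ≤ Q * N⁻¹ ^ s₁ * (Q ^ 5 * M ^ 2 *
          (3 * L * N⁻¹ + 3 * 2 ^ 13 * L ^ ((1 - s₁ - s₂) / 2) * N ^ (-s₂))) := by
        refine (hμF.measureReal_jointLevel_collision_le hQ hμ a b hN).trans ?_
        gcongr
        exact hμF.measureReal_abs_collisionPhase_le hs₁ hνF hs₂ (by linarith) hQ hμ hν hνQ ha hb
          hM haM hbM (one_le_rpow hN (by linarith)) hN₀
    _ = Q ^ 6 * M ^ 2 * (3 * (N⁻¹ ^ s₁ * (L * N⁻¹)) +
          3 * 2 ^ 13 * (N⁻¹ ^ s₁ * (L ^ ((1 - s₁ - s₂) / 2) * N ^ (-s₂)))) := by ring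
    _ ≤ Q ^ 6 * M ^ 2 * (3 * N ^ (-2 * (s + (s - 1 / 2) * (1 - s) / 4)) +
          3 * 2 ^ 13 * N ^ (-2 * (s + (s - 1 / 2) * (1 - s) / 4))) := by gcongr
    _ = (3 + 3 * 2 ^ 13) * Q ^ 6 * M ^ 2 * N ^ (-2 * (s + (s - 1 / 2) * (1 - s) / 4)) := by ring
    _ ≤ 2 ^ 15 * Q ^ 6 * M ^ 2 * N ^ (-2 * (s + (s - 1 / 2) * (1 - s) / 4)) := by
        gcongr
        norm_num

end Collision

section Main

variable {Ω : Type*} [MeasurableSpace Ω] {P : Measure Ω} {X Y : Ω → ℝ}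
  {s s₁ s₂ C₁ C₂ R a b : ℝ}

lemma identDistrib_prod_of_indepFun [IsFiniteMeasure P] {α : Type*} [MeasurableSpace α]
    {κ : Measure α} [SFinite κ] (hX : Measurable X) (hY : Measurable Y) (hXY : IndepFun X Y P)
    {f : α → ℝ} (hf : MeasurePreserving f κ (P.map Y)) {g : ℝ × ℝ → ℝ} (hg : Measurable g) :
    IdentDistrib (fun ω ↦ g (X ω, Y ω)) (fun p ↦ g (p.2, f p.1)) P (κ.prod (P.map X)) := by
  have map_prod :
      (κ.prod (P.map X)).map (Prod.swap ∘ Prod.map f id) = P.map fun ω ↦ (X ω, Y ω) := by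
    rw [(indepFun_iff_map_prod_eq_prod_map_map hX.aemeasurable hY.aemeasurable).1 hXY]
    exact (Measure.measurePreserving_swap.comp (hf.prod (.id _))).map_eq
  have identDistrib_prod : IdentDistrib (fun ω ↦ (X ω, Y ω)) (Prod.swap ∘ Prod.map f id) P
      (κ.prod (P.map X)) :=
    ⟨(hX.prodMk hY).aemeasurable,
      (measurable_swap.comp (hf.measurable.prodMap measurable_id)).aemeasurable, map_prod.symm⟩
  exact identDistrib_prod.comp hg

lemma neg_logb_le_Hn_add_Hn [IsProbabilityMeasure P] (hX : Measurable X) (hY : Measurable Y)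
    (hXY : IndepFun X Y P) (hXR : ∀ᵐ ω ∂P, |X ω| ≤ R) (hYR : ∀ᵐ ω ∂P, |Y ω| ≤ R) (n : ℕ) {δ : ℝ}
    (hδ : ((((P.map Y).prod (P.map Y)).prod (P.map X)).prod
      (((P.map Y).prod (P.map Y)).prod (P.map X))).real
        {q | jointLevel a b (2 ^ n) q.1 = jointLevel a b (2 ^ n) q.2} ≤ δ) :
    -logb 2 δ ≤ Hn P n (fun ω ↦ X ω + Y ω) + Hn P n (fun ω ↦ a * X ω ^ 2 + b * Y ω ^ 2) := by
  have := Measure.isProbabilityMeasure_map (μ := P) hX.aemeasurable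
  have := Measure.isProbabilityMeasure_map (μ := P) hY.aemeasurable
  have sum_ident := identDistrib_prod_of_indepFun hX hY hXY (g := fun q ↦ q.1 + q.2)
    (measurePreserving_fst (μ := P.map Y) (ν := P.map Y)) (by fun_prop)
  have form_ident := identDistrib_prod_of_indepFun hX hY hXY
    (g := fun q ↦ a * q.1 ^ 2 + b * q.2 ^ 2)
    (measurePreserving_snd (μ := P.map Y) (ν := P.map Y)) (by fun_prop)
  have sum_le : ∀ᵐ ω ∂P, |X ω + Y ω| ≤ R + R := by
    filter_upwards [hXR, hYR] with ω hx hy using (abs_add_le _ _).trans (add_le_add hx hy)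
  have form_le : ∀ᵐ ω ∂P, |a * X ω ^ 2 + b * Y ω ^ 2| ≤ |a| * R ^ 2 + |b| * R ^ 2 := by
    filter_upwards [hXR, hYR] with ω hx hy
    refine (abs_add_le _ _).trans ?_
    rw [abs_mul, abs_mul, abs_pow, abs_pow]
    gcongr
  obtain ⟨I, hI⟩ := exists_finset_floor_mem
    (sum_ident.ae_snd (p := fun t ↦ |t| ≤ R + R) (measurableSet_le (by fun_prop) (by fun_prop))
      sum_le) n
  obtain ⟨J, hJ⟩ := exists_finset_floor_mem
    (form_ident.ae_snd (p := fun t ↦ |t| ≤ |a| * R ^ 2 + |b| * R ^ 2)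
      (measurableSet_le (by fun_prop) (by fun_prop)) form_le) n
  have jointLevel_mem : ∀ᵐ p ∂((P.map Y).prod (P.map Y)).prod (P.map X),
      jointLevel a b (2 ^ n) p ∈ I ×ˢ J := by
    filter_upwards [hI, hJ] with p hp hp' using Finset.mem_product.2 ⟨hp, hp'⟩
  rw [Hn_eq_of_identDistrib sum_ident, Hn_eq_of_identDistrib form_ident, Hn_eq_entOf_floor,
    Hn_eq_entOf_floor]
  exact (neg_logb_le_entOf_of_collision_le (by fun_prop) jointLevel_mem hδ).trans
    (entOf_prodMk_le_add (by fun_prop) (by fun_prop) hI hJ)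

lemma sub_logb_le_max_Hn [IsProbabilityMeasure P] {Q M : ℝ} (hX : Measurable X) (hY : Measurable Y)
    (hXY : IndepFun X Y P) (hXF : Frostman P X s₁ Q) (hs₁ : s₁ ∈ Set.Icc 0 1)
    (hYF : Frostman P Y s₂ Q) (hs₂ : s₂ ∈ Set.Icc 0 1) (hs : s ∈ Set.Ioo (1 / 2) 1)
    (hsum : 2 * s ≤ s₁ + s₂) (hQ : 1 ≤ Q) (hXQ : ∀ᵐ ω ∂P, |X ω| ≤ Q)
    (hYQ : ∀ᵐ ω ∂P, |Y ω| ≤ Q) (hQY : ∀ᵐ ω ∂P, Q⁻¹ ≤ |Y ω|) (ha : a ≠ 0) (hb : b ≠ 0)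
    (hM : 1 + |a| ≤ M) (haM : |a|⁻¹ ≤ M) (hbM : |b|⁻¹ ≤ M) (n : ℕ) :
    n * (s + (s - 1 / 2) * (1 - s) / 4) - 8 - 3 * logb 2 Q - logb 2 M ≤
      max (Hn P n (fun ω ↦ X ω + Y ω)) (Hn P n (fun ω ↦ a * X ω ^ 2 + b * Y ω ^ 2)) := by
  have hM₁ : 1 ≤ M := by linarith [abs_nonneg a]
  have logb_Q_nonneg : 0 ≤ logb 2 Q := logb_nonneg one_lt_two hQ
  have logb_M_nonneg : 0 ≤ logb 2 M := logb_nonneg one_lt_two hM₁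
  rcases le_total (s - (1 - s) / 4) s₁ with hss₁ | hss₁
  · have := Measure.isProbabilityMeasure_map (μ := P) hX.aemeasurable
    have := Measure.isProbabilityMeasure_map (μ := P) hY.aemeasurable
    have joint_entropy := neg_logb_le_Hn_add_Hn hX hY hXY hXQ hYQ n <|
      (hXF.map hX).measureReal_jointLevel_collision_le_rpow hs₁ (hYF.map hY) hs₂ hs hsum hss₁ hQ
        ((ae_map_iff hX.aemeasurable (measurableSet_le (by fun_prop) (by fun_prop))).2 hXQ)
        ((ae_map_iff hY.aemeasurable (measurableSet_le (by fun_prop) (by fun_prop))).2 hYQ)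
        ((ae_map_iff hY.aemeasurable (measurableSet_le (by fun_prop) (by fun_prop))).2 hQY)
        ha hb hM haM hbM (one_le_pow₀ one_le_two)
    rw [logb_mul (by positivity) (by positivity), logb_mul (by positivity) (by positivity),
      logb_mul (by positivity) (by positivity), logb_rpow_eq_mul_logb_of_pos (by positivity),
      logb_pow, logb_pow, logb_pow, logb_pow, logb_self_eq_one one_lt_two] at joint_entropy
    push_cast at joint_entropy
    have := le_max_left (Hn P n fun ω ↦ X ω + Y ω) (Hn P n fun ω ↦ a * X ω ^ 2 + b * Y ω ^ 2)
    have := le_max_right (Hn P n fun ω ↦ X ω + Y ω) (Hn P n fun ω ↦ a * X ω ^ 2 + b * Y ω ^ 2)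
    linarith
  · have sum_le : ∀ᵐ ω ∂P, |X ω + Y ω| ≤ Q + Q := by
      filter_upwards [hXQ, hYQ] with ω hx hy using (abs_add_le _ _).trans (add_le_add hx hy)
    have sum_entropy : n * s₂ - logb 2 Q ≤ Hn P n (fun ω ↦ X ω + Y ω) :=
      (hYF.add_of_indepFun hX hY hXY).mul_sub_logb_le_Hn (hX.add hY) sum_le n
    have exponent_le : n * (s + (s - 1 / 2) * (1 - s) / 4) ≤ n * s₂ := by
      gcongr
      nlinarith [hs.1, hs.2]
    exact le_max_of_le_left (by linarith)

lemma le_two_rpow_of_logPlus_le {x t : ℝ} (hx : 0 < x) (h : logPlus x ≤ t) : x ≤ 2 ^ t :=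
  (logb_le_iff_le_rpow one_lt_two hx).1 ((le_max_left _ _).trans h)

lemma logPlus_nonneg (x : ℝ) : 0 ≤ logPlus x := le_max_right _ _

lemma Frostman.neg_logb_le_one_add_logPlus [IsProbabilityMeasure P] {C : ℝ}
    (h : Frostman P X s C) (hs : s ∈ Set.Icc 0 1) (hR : 0 < R) (hXR : ∀ᵐ ω ∂P, |X ω| ≤ R) :
    -logb 2 C ≤ 1 + logPlus R := by
  have hC : 0 < C := h.pos_of_abs_le hXR
  have one_le : 1 ≤ C * (2 * R) ^ s := h.one_le_mul_rpow (z := 0) (by positivity) <|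
    hXR.mono fun ω hω ↦ by simpa using hω.trans_lt (by linarith)
  have logb_nonneg := logb_nonneg one_lt_two one_le
  rw [logb_mul hC.ne' (by positivity), logb_rpow_eq_mul_logb_of_pos (by positivity),
    logb_mul two_ne_zero hR.ne', logb_self_eq_one one_lt_two] at logb_nonneg
  have logb_le : logb 2 R ≤ logPlus R := le_max_left _ _
  nlinarith [hs.1, hs.2, logPlus_nonneg R]

lemma logPlus_le_logPlus_mul_add {x y k : ℝ} (hx : 0 < x) (hy : 0 < y) (hk : 0 ≤ k)
    (hky : -logb 2 y ≤ k) : logPlus x ≤ logPlus (x * y) + k := by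
  have logb_le : logb 2 (x * y) ≤ logPlus (x * y) := le_max_left _ _
  rw [logb_mul hx.ne' hy.ne'] at logb_le
  exact max_le (by linarith) (add_nonneg (logPlus_nonneg _) hk)

lemma Frostman.logPlus_add_logPlus_le [IsProbabilityMeasure P] (hX : Frostman P X s₁ C₁)
    (hs₁ : s₁ ∈ Set.Icc 0 1) (hY : Frostman P Y s₂ C₂) (hs₂ : s₂ ∈ Set.Icc 0 1) (hR : 0 < R)
    (hXR : ∀ᵐ ω ∂P, |X ω| ≤ R) (hYR : ∀ᵐ ω ∂P, |Y ω| ≤ R) :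
    logPlus C₁ + logPlus C₂ ≤ 2 * (logPlus (C₁ * C₂) + 1 + logPlus R) := by
  have hk : 0 ≤ 1 + logPlus R := add_nonneg zero_le_one (logPlus_nonneg R)
  have logPlus_C₁_le := logPlus_le_logPlus_mul_add (hX.pos_of_abs_le hXR) (hY.pos_of_abs_le hYR) hk
    (hY.neg_logb_le_one_add_logPlus hs₂ hR hYR)
  have logPlus_C₂_le := logPlus_le_logPlus_mul_add (hY.pos_of_abs_le hYR) (hX.pos_of_abs_le hXR) hk
    (hX.neg_logb_le_one_add_logPlus hs₁ hR hXR)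
  rw [mul_comm C₂ C₁] at logPlus_C₂_le
  linarith

lemma abs_mem_Icc_of_mem_union {c₁ c₂ x : ℝ} (hc₂ : 0 < c₂)
    (hx : x ∈ Set.Icc (-c₁) (-c₂) ∪ Set.Icc c₂ c₁) : |x| ∈ Set.Icc c₂ c₁ := by
  rcases hx with ⟨hl, hu⟩ | ⟨hl, hu⟩
  · rw [abs_of_nonpos (by linarith)]
    exact ⟨by linarith, by linarith⟩
  · rw [abs_of_pos (by linarith)]
    exact ⟨hl, hu⟩

end Main

theorem diagonal_indep_entropy_general {Ω : Type*} [MeasurableSpace Ω] {P : Measure Ω}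
    [IsProbabilityMeasure P] {X Y : Ω → ℝ} {s s₁ s₂ C₁ C₂ c₁ c₂ a b : ℝ}
    (hs : s ∈ Set.Ioo (1 / 2) 1) (ha : a ≠ 0) (hb : b ≠ 0) (hc₂ : 0 < c₂)
    (hX : Measurable X) (hY : Measurable Y) (hXY : IndepFun X Y P)
    (hXc : ∀ᵐ ω ∂P, |X ω| ≤ c₁) (hYc : ∀ᵐ ω ∂P, |Y ω| ∈ Set.Icc c₂ c₁)
    (hs₁ : s₁ ∈ Set.Icc 0 1) (hs₂ : s₂ ∈ Set.Icc 0 1) (hsum : 2 * s ≤ s₁ + s₂)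
    (hXF : Frostman P X s₁ C₁) (hYF : Frostman P Y s₂ C₂) (n : ℕ) :
    n * (s + (s - 1 / 2) * (1 - s) / 4) -
        9 * (logPlus (C₁ * C₂) + logPlus c₁ + logPlus (1 / c₂)) -
        (14 + logb 2 (1 + |a| + |a|⁻¹ + |b|⁻¹)) ≤
      max (Hn P n (fun ω ↦ X ω + Y ω)) (Hn P n (fun ω ↦ a * X ω ^ 2 + b * Y ω ^ 2)) := by
  have hYc₁ : ∀ᵐ ω ∂P, |Y ω| ≤ c₁ := hYc.mono fun _ h ↦ h.2
  obtain ⟨ω, hω⟩ := hYc.exists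
  have hc₁ : 0 < c₁ := hc₂.trans_le (hω.1.trans hω.2)
  have logPlus_add_le := hXF.logPlus_add_logPlus_le hs₁ hYF hs₂ hc₁ hXc hYc₁
  have := logPlus_nonneg (C₁ * C₂)
  have := logPlus_nonneg C₁
  have := logPlus_nonneg C₂
  have := logPlus_nonneg c₁
  have := logPlus_nonneg (1 / c₂)
  set t := logPlus C₁ + logPlus C₂ + logPlus c₁ + logPlus (1 / c₂)
  have c₁_le : c₁ ≤ 2 ^ t := le_two_rpow_of_logPlus_le hc₁ (by linarith)
  have inv_le : (2 ^ t)⁻¹ ≤ c₂ := inv_le_of_inv_le₀ hc₂ <| by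
    simpa using le_two_rpow_of_logPlus_le (one_div_pos.2 hc₂) (by linarith : _ ≤ t)
  have entropy_ge := sub_logb_le_max_Hn (Q := 2 ^ t) (M := 1 + |a| + |a|⁻¹ + |b|⁻¹) hX hY hXY
    (hXF.mono (le_two_rpow_of_logPlus_le (hXF.pos_of_abs_le hXc) (by linarith))) hs₁
    (hYF.mono (le_two_rpow_of_logPlus_le (hYF.pos_of_abs_le hYc₁) (by linarith))) hs₂ hs hsum
    (one_le_rpow one_le_two (by linarith))
    (hXc.mono fun _ h ↦ h.trans c₁_le) (hYc₁.mono fun _ h ↦ h.trans c₁_le)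
    (hYc.mono fun _ h ↦ inv_le.trans h.1) ha hb
    (by linarith [inv_nonneg.2 (abs_nonneg a), inv_nonneg.2 (abs_nonneg b)])
    (by linarith [abs_nonneg a, inv_nonneg.2 (abs_nonneg b)])
    (by linarith [abs_nonneg a, inv_nonneg.2 (abs_nonneg a)]) n
  rw [logb_rpow two_pos one_lt_two.ne'] at entropy_ge
  linarith

/-- Lemma (diagonal forms with independent random variables): there is an absolute `A > 0`
such that for each `1/2 < s < 1` there is `ε₁ = ε₁(s) > 0`, and for each pair of nonzero
reals `α, β` a constant `B = B(α,β,s) > 0`, such that: whenever `C₁, C₂ > 0`,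
`0 < c₂ < c₁`, `X, Y` are independent with essential ranges in `[-c₁,-c₂] ∪ [c₂,c₁]`,
`X` is `(s₁,C₁)`-Frostman, `Y` is `(s₂,C₂)`-Frostman, `0 ≤ s₁,s₂ ≤ 1`, `s₁+s₂ ≥ 2s`, then
for all `n`, `max{Hₙ(X+Y), Hₙ(αX²+βY²)} ≥ n(s+ε₁) − A(log₊(C₁C₂)+log₊c₁+log₊(1/c₂)) − B`. -/
theorem diagonal_indep_entropy :
    ∃ A : ℝ, 0 < A ∧
      ∀ s : ℝ, 1 / 2 < s → s < 1 →
        ∃ ε₁ : ℝ, 0 < ε₁ ∧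
          ∀ (a b : ℝ), a ≠ 0 → b ≠ 0 →
            ∃ B : ℝ, 0 < B ∧
              ∀ (C₁ C₂ c₁ c₂ : ℝ), 0 < C₁ → 0 < C₂ → 0 < c₂ → c₂ < c₁ →
                ∀ (Ω : Type) (mΩ : MeasurableSpace Ω) (P : Measure Ω),
                  IsProbabilityMeasure P →
                  ∀ (X Y : Ω → ℝ), Measurable X → Measurable Y →
                    IndepFun X Y P →
                    (∀ᵐ ω ∂P,
                      X ω ∈ Set.Icc (-c₁) (-c₂) ∪ Set.Icc c₂ c₁ ∧
                      Y ω ∈ Set.Icc (-c₁) (-c₂) ∪ Set.Icc c₂ c₁) →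
                    ∀ (s₁ s₂ : ℝ), 0 ≤ s₁ → s₁ ≤ 1 → 0 ≤ s₂ → s₂ ≤ 1 → 2 * s ≤ s₁ + s₂ →
                      Frostman P X s₁ C₁ → Frostman P Y s₂ C₂ →
                      ∀ n : ℕ,
                        (n : ℝ) * (s + ε₁) -
                            A * (logPlus (C₁ * C₂) + logPlus c₁ + logPlus (1 / c₂)) - B ≤
                          max (Hn P n (fun ω => X ω + Y ω))
                            (Hn P n (fun ω => a * X ω ^ 2 + b * Y ω ^ 2)) := by
  refine ⟨9, by norm_num, fun s hs hs' ↦ ⟨(s - 1 / 2) * (1 - s) / 4,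
    div_pos (mul_pos (sub_pos.2 hs) (sub_pos.2 hs')) four_pos, fun a b ha hb ↦
    ⟨14 + logb 2 (1 + |a| + |a|⁻¹ + |b|⁻¹), ?_, ?_⟩⟩⟩
  · have : 0 ≤ logb 2 (1 + |a| + |a|⁻¹ + |b|⁻¹) := logb_nonneg one_lt_two <| by
      linarith [abs_nonneg a, inv_nonneg.2 (abs_nonneg a), inv_nonneg.2 (abs_nonneg b)]
    linarith
  · intro C₁ C₂ c₁ c₂ _ _ hc₂ _ Ω _ P _ X Y hX hY hXY hmem s₁ s₂ hs₁ hs₁' hs₂ hs₂' hsum hXF hYF n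
    exact diagonal_indep_entropy_general ⟨hs, hs'⟩ ha hb hc₂ hX hY hXY
      (hmem.mono fun _ h ↦ (abs_mem_Icc_of_mem_union hc₂ h.1).2)
      (hmem.mono fun _ h ↦ abs_mem_Icc_of_mem_union hc₂ h.2) ⟨hs₁, hs₁'⟩ ⟨hs₂, hs₂'⟩ hsum hXF hYF n
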